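/- arXiv:2001.09836 — 3 statements merged into one kernel-verified Lean document; each statement's English description precedes it below -/
import Mathlib

section
/- For every n ≥ 3, the star graph S_n has growth rate γ(S_n) = 1 + (1/n) · Σ_{k=1}^∞ a_{n−1,k} / n^k. (Formula (5).) -/
open MeasureTheory Filter Topology
open scoped ENNReal Classical

/-- The ballistic deposition height process on a graph `G`, started from `h0`,
driven by the sequence of chosen vertices `X`. -/
noncomputable def heightProcess {V : Type*} [Fintype V] (G : SimpleGraph V)
    (h0 : V → ℕ) (X : ℕ → V) : ℕ → V → ℕ
  | 0 => h0
  | n + 1 => fun x =>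
      if x = X n then
        1 + Finset.univ.sup (fun y =>
          if y = x ∨ G.Adj x y then heightProcess G h0 X n y else 0)
      else heightProcess G h0 X n x

/-- `X` is an i.i.d. sequence of uniformly distributed `V`-valued random variables on `(Ω, μ)`:
every finite cylinder event has the product-of-uniform probabilities. -/
def IsUniformIID {V : Type*} [Fintype V] {Ω : Type*} [MeasurableSpace Ω]
    (μ : Measure Ω) (X : ℕ → Ω → V) : Prop :=
  (∀ (n : ℕ) (v : V), MeasurableSet {ω | X n ω = v}) ∧
  (∀ (n : ℕ) (f : ℕ → V), μ {ω | ∀ k < n, X k ω = f k} = (Fintype.card V : ℝ≥0∞)⁻¹ ^ n)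

/-- `γ` is the growth rate of `G`: `γ > 0` and, for any i.i.d. uniform driving sequence,
almost surely `(#V/n) · max_x H_{x,n} → γ` and `(#V/n) · min_x H_{x,n} → γ`. -/
def IsGrowthRate {V : Type*} [Fintype V] (G : SimpleGraph V) (γ : ℝ) : Prop :=
  0 < γ ∧
  ∀ {Ω : Type} [MeasurableSpace Ω] (μ : Measure Ω) [IsProbabilityMeasure μ]
    (X : ℕ → Ω → V), IsUniformIID μ X →
    (∀ᵐ ω ∂μ, Tendsto (fun n : ℕ =>
        (Fintype.card V : ℝ) *
          (⨆ x : V, (heightProcess G (fun _ => 0) (fun k => X k ω) n x : ℝ)) / n)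
      atTop (𝓝 γ)) ∧
    (∀ᵐ ω ∂μ, Tendsto (fun n : ℕ =>
        (Fintype.card V : ℝ) *
          (⨅ x : V, (heightProcess G (fun _ => 0) (fun k => X k ω) n x : ℝ)) / n)
      atTop (𝓝 γ))


/-- `a n k = Σ_{r_1+⋯+r_n = k} (k! / (r_1! ⋯ r_n!)) · max_j r_j`. -/
def a (n k : ℕ) : ℕ :=
  ∑ r ∈ Finset.Nat.antidiagonalTuple n k,
    Nat.multinomial Finset.univ r * Finset.univ.sup r

/-- The star graph `S n` on `n` vertices `0, 1, …, n−1`, with edges `{0, i}` for `1 ≤ i ≤ n−1`. -/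
def starGraph (n : ℕ) : SimpleGraph (Fin n) :=
  SimpleGraph.fromRel fun i _ => (i : ℕ) = 0

namespace BD

noncomputable def H {m : ℕ} (x : ℕ → Fin (m+1)) (k : ℕ) (v : Fin (m+1)) : ℕ :=
  heightProcess (starGraph (m+1)) (fun _ => 0) x k v

noncomputable def D {m : ℕ} (x : ℕ → Fin (m+1)) (k : ℕ) : ℕ := Finset.univ.sup (H x k)

variable {m : ℕ} (x : ℕ → Fin (m+1))

lemma H_le_D (k : ℕ) (v) : H x k v ≤ D x k := Finset.le_sup (f := H x k) (Finset.mem_univ v)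

lemma D_zero : D x 0 = 0 := by
  refine Nat.le_zero.1 (Finset.sup_le fun v _ => ?_)
  exact Nat.le_of_eq rfl

lemma H_succ_ne {k : ℕ} {v} (h : v ≠ x k) : H x (k+1) v = H x k v := by
  exact if_neg h

lemma star_adj (v w : Fin (m+1)) : (starGraph (m+1)).Adj v w ↔ v ≠ w ∧ (v = 0 ∨ w = 0) := by
  have h1 : ∀ y : Fin (m+1), y = 0 ↔ (y : ℕ) = 0 := fun y => Fin.ext_iff
  unfold starGraph
  rw [SimpleGraph.fromRel_adj, h1, h1]

lemma H_succ_zero {k : ℕ} (h : x k = 0) : H x (k+1) 0 = 1 + D x k := by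
  have : H x (k+1) 0 = 1 + Finset.univ.sup (fun y =>
          if y = 0 ∨ (starGraph (m+1)).Adj 0 y then H x k y else 0) := by
    simp only [H, heightProcess, h, if_true]
    congr!
  rw [this, D]
  congr 2
  funext y
  rw [if_pos]
  rw [star_adj]
  by_cases hy : y = 0
  · exact Or.inl hy
  · exact Or.inr ⟨fun h => hy h.symm, Or.inl rfl⟩

lemma H_succ_leaf {k : ℕ} (h : x k ≠ 0) :
    H x (k+1) (x k) = 1 + max (H x k (x k)) (H x k 0) := by
  have : H x (k+1) (x k) = 1 + Finset.univ.sup (fun y =>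
          if y = x k ∨ (starGraph (m+1)).Adj (x k) y then H x k y else 0) := by
    simp only [H, heightProcess, if_true]
    congr!
  rw [this]
  congr 1
  apply le_antisymm
  · apply Finset.sup_le
    intro y _
    split_ifs with hy
    · rcases hy with rfl | hy
      · exact le_max_left _ _
      · rw [star_adj] at hy
        rcases hy.2 with h0 | h0
        · exact absurd h0 h
        · rw [h0]; exact le_max_right _ _
    · exact Nat.zero_le _
  · apply max_le
    · refine le_trans ?_ (Finset.le_sup (Finset.mem_univ (x k)))
      simp
    · refine le_trans ?_ (Finset.le_sup (Finset.mem_univ 0))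
      simp [star_adj, h]

lemma H_succ_self_ge (k : ℕ) : 1 + max (H x k (x k)) (H x k 0) ≤ H x (k+1) (x k) := by
  by_cases h : x k = 0
  · rw [h, H_succ_zero x h]
    simp [H_le_D]
  · rw [H_succ_leaf x h]

lemma H_mono (k : ℕ) (v) : H x k v ≤ H x (k+1) v := by
  by_cases h : v = x k
  · have := H_succ_self_ge x k
    rw [← h] at this
    have := le_max_left (H x k v) (H x k 0)
    omega
  · rw [H_succ_ne x h]

lemma D_mono (k : ℕ) : D x k ≤ D x (k+1) :=
  Finset.sup_le fun v _ => (H_mono x k v).trans (H_le_D x (k+1) v)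

lemma D_succ_le (k : ℕ) : D x (k+1) ≤ D x k + 1 := by
  apply Finset.sup_le
  intro v _
  by_cases h : v = x k
  · subst h
    by_cases h : x k = 0
    · rw [h, H_succ_zero x h]; omega
    · rw [H_succ_leaf x h]
      have := H_le_D x k (x k)
      have := H_le_D x k 0
      omega
  · rw [H_succ_ne x h]
    have := H_le_D x k v
    omega

lemma D_succ_zero {k : ℕ} (h : x k = 0) : D x (k+1) = D x k + 1 := by
  apply le_antisymm (D_succ_le x k)
  have := H_le_D x (k+1) 0
  rw [H_succ_zero x h] at this
  omega

def cnt (t s : ℕ) (j : Fin (m+1)) : ℕ := ∑ i ∈ Finset.range s, if x (t+i) = j then 1 else 0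

lemma excursion {t : ℕ} (ht : x t = 0) (s : ℕ) (hs : ∀ i < s, x (t+1+i) ≠ 0) :
    H x (t+1+s) 0 = D x (t+1) ∧ ∀ j, H x (t+1+s) j ≤ D x (t+1) + cnt x (t+1) s j ∧
      (0 < cnt x (t+1) s j → H x (t+1+s) j = D x (t+1) + cnt x (t+1) s j) := by
  induction s with
  | zero =>
    refine ⟨?_, fun j => ⟨?_, ?_⟩⟩
    · simp only [Nat.add_zero]
      rw [H_succ_zero x ht, D_succ_zero x ht]; omega
    · simpa [cnt] using H_le_D x (t+1) j
    · simp [cnt]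
  | succ s ih =>
    obtain ⟨h0, hj⟩ := ih (fun i hi => hs i (by omega))
    have hx := hs s (by omega)
    rw [← Nat.add_assoc]
    refine ⟨?_, fun j => ?_⟩
    · rw [H_succ_ne x (Ne.symm hx), h0]
    · have hc : cnt x (t+1) (s+1) j = cnt x (t+1) s j + if x (t+1+s) = j then 1 else 0 := by
        simp only [cnt, Finset.sum_range_succ]
      by_cases h : x (t+1+s) = j
      · subst h
        rw [hc, if_pos rfl, H_succ_leaf x hx, h0]
        obtain ⟨h1, h2⟩ := hj (x (t+1+s))
        rcases Nat.eq_zero_or_pos (cnt x (t+1) s (x (t+1+s))) with hz | hp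
        · omega
        · have := h2 hp
          omega
      · rw [hc, if_neg h, H_succ_ne x (Ne.symm h)]
        simpa using hj j

/-- max count of a letter in a word -/
noncomputable def mc {α : Type} [Fintype α] [DecidableEq α] {s : ℕ} (w : Fin s → α) : ℕ :=
  Finset.univ.sup fun j => ∑ i, if w i = j then 1 else 0

lemma D_excursion {t : ℕ} (ht : x t = 0) (s : ℕ) (hs : ∀ i < s, x (t+1+i) ≠ 0) :
    D x (t+1+s) = D x (t+1) + mc (fun i : Fin s => x (t+1+i)) := by
  obtain ⟨h0, hj⟩ := excursion x ht s hs
  have hmc : mc (fun i : Fin s => x (t+1+i)) = Finset.univ.sup (cnt x (t+1) s) := by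
    unfold mc
    congr 1
    funext j
    simp only [cnt]
    rw [Finset.sum_range]
  rw [hmc]
  apply le_antisymm
  · apply Finset.sup_le
    intro v _
    have := Finset.le_sup (f := cnt x (t+1) s) (Finset.mem_univ v)
    have := (hj v).1
    omega
  · obtain ⟨v, -, hv⟩ := Finset.exists_mem_eq_sup Finset.univ ⟨0, Finset.mem_univ _⟩ (cnt x (t+1) s)
    rw [hv]
    rcases Nat.eq_zero_or_pos (cnt x (t+1) s v) with hz | hp
    · rw [hz, ← h0]; exact H_le_D x _ 0
    · rw [← (hj v).2 hp]; exact H_le_D x _ v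

/-- pattern weight -/
noncomputable def phi (s : ℕ) (u : Fin (s+2) → Fin (m+1)) : ℝ :=
  if u 0 = 0 ∧ ∀ i : Fin (s+1), u i.succ ≠ 0 then
    (mc (Fin.tail u) : ℝ) - mc (Fin.init (Fin.tail u)) else 0

noncomputable def g (k : ℕ) : ℝ := (D x (k+1) : ℝ) - D x k

lemma phi_eq {t s : ℕ} (ht : x t = 0) (hs : ∀ i < s+1, x (t+1+i) ≠ 0) :
    phi s (fun i : Fin (s+2) => x (t+i)) = g x (t+1+s) := by
  have h1 := D_excursion x ht s (fun i hi => hs i (by omega))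
  have h2 := D_excursion x ht (s+1) hs
  unfold phi g
  rw [if_pos]
  · rw [← Nat.add_assoc] at h2
    rw [h1, h2]
    have e1 : Fin.tail (fun i : Fin (s+2) => x (t+i)) = fun i : Fin (s+1) => x (t+1+i) := by
      funext i; simp only [Fin.tail, Fin.val_succ]; congr 1; omega
    rw [e1]
    have e2 : (Fin.init fun i : Fin (s+1) => x (t+1+i)) = fun i : Fin s => x (t+1+i) := by
      funext i; simp [Fin.init]
    rw [e2]
    push_cast
    ring
  · refine ⟨by simpa using ht, fun i => ?_⟩
    have := hs i i.2
    simpa [Nat.add_assoc, Nat.add_comm 1] using this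

lemma phi_zero {t s : ℕ} (h : ¬ (x t = 0 ∧ ∀ i < s+1, x (t+1+i) ≠ 0)) :
    phi s (fun i : Fin (s+2) => x (t+i)) = 0 := by
  unfold phi
  rw [if_neg]
  rintro ⟨h1, h2⟩
  apply h
  refine ⟨by simpa using h1, fun i hi => ?_⟩
  have := h2 ⟨i, hi⟩
  simpa [Nat.add_assoc, Nat.add_comm 1] using this

noncomputable def e (s k : ℕ) : ℝ :=
  if s + 1 ≤ k then phi s (fun i : Fin (s+2) => x ((k-(s+1))+i)) else 0

noncomputable def psi (L : ℕ) (u : Fin L → Fin (m+1)) : ℝ := if ∀ i, u i ≠ 0 then 1 else 0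

noncomputable def T (L k : ℕ) : ℝ := if L ≤ k then psi L (fun i : Fin L => x ((k-L)+i)) else 1

noncomputable def z (k : ℕ) : ℝ := if x k = 0 then 1 else 0

lemma e_zero {s k : ℕ} (h : ¬ (s+1 ≤ k ∧ x (k-(s+1)) = 0 ∧ ∀ i ≤ s, x (k-i) ≠ 0)) :
    e x s k = 0 := by
  unfold e
  split_ifs with hk
  · apply phi_zero
    rintro ⟨h1, h2⟩
    refine h ⟨hk, h1, fun i hi => ?_⟩
    have := h2 (s-i) (by omega)
    rwa [show k - (s+1) + 1 + (s-i) = k - i by omega] at this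
  · rfl

lemma e_eq {s k : ℕ} (h : s+1 ≤ k ∧ x (k-(s+1)) = 0 ∧ ∀ i ≤ s, x (k-i) ≠ 0) :
    e x s k = g x k := by
  unfold e
  rw [if_pos h.1, phi_eq x h.2.1]
  · congr 1; omega
  · intro i hi
    have := h.2.2 (s-i) (by omega)
    rwa [show k - (s+1) + 1 + i = k - (s-i) by omega]

lemma g_nonneg (k : ℕ) : 0 ≤ g x k := by
  have : (D x k : ℝ) ≤ D x (k+1) := by exact_mod_cast D_mono x k
  unfold g; linarith

lemma g_le (k : ℕ) : g x k ≤ 1 := by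
  have : (D x (k+1) : ℝ) ≤ D x k + 1 := by exact_mod_cast D_succ_le x k
  unfold g; linarith

lemma T_nonneg (L k : ℕ) : 0 ≤ T x L k := by
  unfold T psi; split_ifs <;> norm_num

lemma sandwich (L k : ℕ) : z x k + ∑ s ∈ Finset.range L, e x s k ≤ g x k ∧
    g x k ≤ z x k + ∑ s ∈ Finset.range L, e x s k + T x L k := by
  by_cases h0 : x k = 0
  · have hs : ∑ s ∈ Finset.range L, e x s k = 0 := by
      apply Finset.sum_eq_zero
      intro s _
      apply e_zero
      rintro ⟨-, -, h⟩
      exact h 0 (by omega) (by simpa using h0)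
    have hg : g x k = 1 := by
      unfold g; rw [D_succ_zero x h0]; push_cast; ring
    have := T_nonneg x L k
    simp only [hs, hg, z, if_pos h0]
    constructor <;> linarith
  · have hz : z x k = 0 := by simp [z, h0]
    rw [hz]
    by_cases hex : ∃ s, s < L ∧ (s+1 ≤ k ∧ x (k-(s+1)) = 0 ∧ ∀ i ≤ s, x (k-i) ≠ 0)
    · obtain ⟨s, hsL, hs⟩ := hex
      have : ∑ s ∈ Finset.range L, e x s k = g x k := by
        rw [Finset.sum_eq_single s, e_eq x hs]
        · intro b _ hb
          apply e_zero
          rintro ⟨b1, b2, b3⟩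
          rcases lt_or_gt_of_ne hb with h | h
          · exact hs.2.2 (b+1) (by omega) b2
          · exact b3 (s+1) (by omega) hs.2.1
        · intro h; exact absurd (Finset.mem_range.2 hsL) h
      rw [this]
      have := T_nonneg x L k
      constructor <;> linarith
    · have hs : ∑ s ∈ Finset.range L, e x s k = 0 := by
        apply Finset.sum_eq_zero
        intro s hs
        apply e_zero
        intro h
        exact hex ⟨s, Finset.mem_range.1 hs, h⟩
      have hT : T x L k = 1 := by
        unfold T
        split_ifs with hk
        · unfold psi
          rw [if_pos]
          have key : ∀ i ≤ L, x (k-i) ≠ 0 := by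
            intro i
            induction i using Nat.strong_induction_on with
            | _ i ih =>
              intro hi hx
              rcases i with _ | i
              · exact h0 (by simpa using hx)
              · exact hex ⟨i, by omega, by omega, hx, fun j hj => ih j (by omega) (by omega)⟩
          intro i
          have := key (L-i) (by omega)
          rwa [show k - (L-i) = k - L + i by omega] at this
        · rfl
      rw [hs, hT]
      have := g_nonneg x k
      have := g_le x k
      constructor <;> linarith

end BD
namespace BD

def Avg (f : ℕ → ℝ) (p : ℝ) : Prop :=
  Tendsto (fun N : ℕ => (∑ k ∈ Finset.range N, f k) / (N : ℝ)) atTop (𝓝 p)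

lemma Avg.add {f g : ℕ → ℝ} {p q : ℝ} (hf : Avg f p) (hg : Avg g q) :
    Avg (fun k => f k + g k) (p + q) := by
  unfold Avg at *
  refine (hf.add hg).congr fun N => ?_
  rw [Finset.sum_add_distrib, add_div]

lemma Avg.mul_const {f : ℕ → ℝ} {p : ℝ} (hf : Avg f p) (c : ℝ) :
    Avg (fun k => c * f k) (c * p) := by
  unfold Avg at *
  refine (hf.const_mul c).congr fun N => ?_
  rw [← Finset.mul_sum, mul_div_assoc]

lemma Avg.sum {ι : Type*} (S : Finset ι) {f : ι → ℕ → ℝ} {p : ι → ℝ}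
    (hf : ∀ i ∈ S, Avg (f i) (p i)) : Avg (fun k => ∑ i ∈ S, f i k) (∑ i ∈ S, p i) := by
  unfold Avg at *
  refine (tendsto_finsetSum S hf).congr fun N => ?_
  rw [Finset.sum_comm, Finset.sum_div]

lemma Avg.shift {f : ℕ → ℝ} {p : ℝ} (c : ℕ) (hf : Avg (fun k => f (k + c)) p) : Avg f p := by
  unfold Avg at *
  rw [← tendsto_add_atTop_iff_nat c]
  have h1 : Tendsto (fun N : ℕ => (N : ℝ) / (N + (c : ℝ))) atTop (𝓝 1) :=
    tendsto_natCast_div_add_atTop (c : ℝ)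
  have h2 : Tendsto (fun N : ℕ => (∑ k ∈ Finset.range c, f k) / (N : ℝ)) atTop (𝓝 0) :=
    tendsto_const_div_atTop_nhds_zero_nat _
  have h3 := (h2.add hf).mul h1
  simp only [zero_add, mul_one] at h3
  refine h3.congr' ?_
  filter_upwards [eventually_gt_atTop 0] with N hN
  have hN' : (N : ℝ) ≠ 0 := by positivity
  have hN2 : (N : ℝ) + c ≠ 0 := by positivity
  rw [Nat.add_comm N c, Finset.sum_range_add]
  push_cast
  rw [add_comm (c : ℝ)]
  simp only [add_comm c]
  field_simp

def Normal {m : ℕ} (x : ℕ → Fin (m+1)) : Prop :=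
  ∀ (l : ℕ) (u : Fin l → Fin (m+1)),
    Avg (fun k => if (fun i : Fin l => x (k+i)) = u then 1 else 0) ((1 / ((m : ℝ)+1))^l)

lemma Normal.avg {m : ℕ} {x : ℕ → Fin (m+1)} (hx : Normal x) (l : ℕ)
    (φ : (Fin l → Fin (m+1)) → ℝ) :
    Avg (fun k => φ (fun i : Fin l => x (k+i))) ((∑ u, φ u) * (1 / ((m : ℝ)+1))^l) := by
  have := Avg.sum Finset.univ (fun u (_ : u ∈ Finset.univ) => (hx l u).mul_const (φ u))
  rw [Finset.sum_mul]
  convert this using 2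
  simp

lemma mc_succ {m s : ℕ} (w : Fin s → Fin m) : mc (Fin.succ ∘ w) = mc w := by
  unfold mc
  apply le_antisymm
  · apply Finset.sup_le
    intro j _
    rcases Fin.eq_zero_or_eq_succ j with rfl | ⟨j, rfl⟩
    · simp [Fin.succ_ne_zero]
    · refine le_trans (le_of_eq ?_) (Finset.le_sup (Finset.mem_univ j))
      simp
  · apply Finset.sup_le
    intro j _
    refine le_trans (le_of_eq ?_) (Finset.le_sup (Finset.mem_univ j.succ))
    simp

lemma mc_le {α : Type} [Fintype α] [DecidableEq α] {s : ℕ} (w : Fin s → α) : mc w ≤ s := by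
  unfold mc
  apply Finset.sup_le
  intro j _
  refine (Finset.sum_le_sum (g := fun _ => 1) fun i _ => ?_).trans (by simp)
  split_ifs <;> omega

lemma sum_leaf {m l : ℕ} (F : (Fin l → Fin (m+1)) → ℝ) :
    (∑ v, if ∀ i, v i ≠ 0 then F v else 0) = ∑ w : Fin l → Fin m, F (Fin.succ ∘ w) := by
  symm
  apply Finset.sum_of_injOn (fun w : Fin l → Fin m => Fin.succ ∘ w)
  · intro w _ w' _ h
    funext i
    exact Fin.succ_injective _ (congrFun h i)
  · intro w _; simp
  · intro v _ hv
    rw [if_neg]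
    intro h
    apply hv
    refine ⟨fun i => (v i).pred (h i), by simp, ?_⟩
    funext i; simp
  · intro w _
    rw [if_pos]
    intro i
    simp [Fin.succ_ne_zero]

noncomputable def A (m s : ℕ) : ℝ := ∑ w : Fin s → Fin m, (mc w : ℝ)

lemma sum_psi (m L : ℕ) : ∑ u, psi (m := m) L u = (m : ℝ)^L := by
  unfold psi
  rw [sum_leaf (fun _ => (1:ℝ))]
  simp

lemma sum_phi (m s : ℕ) : ∑ u, phi (m := m) s u = A m (s+1) - m * A m s := by
  rw [← (Fin.consEquiv (fun _ : Fin (s+2) => Fin (m+1))).sum_comp, Fintype.sum_prod_type,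
    Finset.sum_eq_single 0]
  · have : ∀ v : Fin (s+1) → Fin (m+1), phi s ((Fin.consEquiv (fun _ : Fin (s+2) => Fin (m+1))) (0, v))
        = if ∀ i, v i ≠ 0 then (mc v : ℝ) - mc (Fin.init v) else 0 := by
      intro v
      simp only [phi, Fin.consEquiv, Equiv.coe_fn_mk, Fin.cons_zero, Fin.cons_succ, Fin.tail_cons,
        true_and]
    simp only [this]
    rw [sum_leaf (fun v => (mc v : ℝ) - mc (Fin.init v)), Finset.sum_sub_distrib]
    congr 1
    · simp only [mc_succ]; rfl
    · have : ∀ w : Fin (s+1) → Fin m, Fin.init (Fin.succ ∘ w) = Fin.succ ∘ (Fin.init w) := by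
        intro w; rfl
      simp only [this, mc_succ]
      rw [← (Fin.snocEquiv (fun _ : Fin (s+1) => Fin m)).sum_comp, Fintype.sum_prod_type]
      simp [Fin.snocEquiv, A]
  · intro b _ hb
    apply Finset.sum_eq_zero
    intro v _
    simp [phi, Fin.consEquiv, hb]
  · simp

lemma A_eq (m s : ℕ) : A m s = a m s := by
  have key : (∑ j : Fin m, (MvPolynomial.X j : MvPolynomial (Fin m) ℝ))^s
      = (∑ j : Fin m, (MvPolynomial.X j : MvPolynomial (Fin m) ℝ))^s := rfl
  conv_lhs at key => rw [Fintype.sum_pow]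
  conv_rhs at key => rw [Finset.sum_pow_eq_sum_piAntidiag]
  let Φ : MvPolynomial (Fin m) ℝ →ₗ[ℝ] ℝ :=
    (MvPolynomial.basisMonomials (Fin m) ℝ).constr ℝ (fun r => ((Finset.univ.sup r : ℕ) : ℝ))
  have hΦ : ∀ r, Φ (MvPolynomial.monomial r 1) = ((Finset.univ.sup r : ℕ) : ℝ) := by
    intro r
    have := (MvPolynomial.basisMonomials (Fin m) ℝ).constr_basis ℝ
      (fun r => ((Finset.univ.sup r : ℕ) : ℝ)) r
    rwa [MvPolynomial.coe_basisMonomials] at this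
  have := congrArg Φ key
  rw [map_sum, map_sum] at this
  unfold A a
  push_cast
  convert this using 1
  · apply Finset.sum_congr rfl
    intro w _
    have : ∏ i, (MvPolynomial.X (w i) : MvPolynomial (Fin m) ℝ)
        = MvPolynomial.monomial (∑ i, Finsupp.single (w i) 1) 1 := by
      simp only [MvPolynomial.X]
      rw [← MvPolynomial.monomial_sum_one]
    rw [this, hΦ]
    unfold mc
    congr 2
    funext j
    simp [Finsupp.finsetSum_apply, Finsupp.single_apply]
  · apply Finset.sum_congr
    · ext r
      simp [Finset.Nat.mem_antidiagonalTuple]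
    · intro r _
      have : ((Nat.multinomial Finset.univ r : ℕ) : MvPolynomial (Fin m) ℝ) * ∏ i, (MvPolynomial.X i)^(r i)
        = (Nat.multinomial Finset.univ r : ℝ) • MvPolynomial.monomial (Finsupp.equivFunOnFinite.symm r) 1 := by
        rw [MvPolynomial.smul_eq_C_mul]
        rw [MvPolynomial.monomial_eq]
        simp [Finsupp.prod_fintype]
      rw [this, map_smul, hΦ]
      simp

noncomputable def S (m : ℕ) : ℝ := ∑' k : ℕ, (a m (k + 1) : ℝ) / ((m : ℝ)+1) ^ (k + 1)

lemma lo_tendsto (m : ℕ) : Tendsto (fun L => ∑ s ∈ Finset.range L,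
    (A m (s+1) - m * A m s) * (1 / ((m : ℝ)+1))^(s+2)) atTop (𝓝 (S m / ((m : ℝ)+1)^2)) := by
  set B : ℕ → ℝ := fun s => A m s / ((m : ℝ)+1)^s with hB
  have hm : (0:ℝ) < (m:ℝ)+1 := by positivity
  have hBs : Summable B := by
    have hs : Summable (fun s : ℕ => (s : ℝ)^1 * ((m:ℝ)/((m : ℝ)+1))^s) := by
      apply summable_pow_mul_geometric_of_norm_lt_one
      rw [Real.norm_of_nonneg (by positivity), div_lt_one hm]
      linarith
    refine Summable.of_nonneg_of_le (fun s => ?_) (fun s => ?_) hs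
    · simp only [hB, A]; positivity
    · simp only [hB, pow_one, div_pow, ← mul_div_assoc]
      gcongr
      unfold A
      refine (Finset.sum_le_sum (g := fun _ => (s:ℝ)) fun w _ => ?_).trans ?_
      · exact_mod_cast mc_le w
      · simp [mul_comm]
  have hB0 : B 0 = 0 := by
    simp only [hB, A]
    simp [mc]
  have hS : ∑' s, B (s+1) = S m := by
    unfold S
    congr 1
    funext k
    simp only [hB, A_eq]
  have hS2 : ∑' s, B s = S m := by
    rw [hBs.tsum_eq_zero_add, hB0, hS, zero_add]
  have h1 : HasSum (fun s => B (s+1)) (S m) := hS ▸ ((summable_nat_add_iff 1).2 hBs).hasSum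
  have h2 : HasSum B (S m) := hS2 ▸ hBs.hasSum
  have h3 := (h1.mul_left (1/((m:ℝ)+1))).sub (h2.mul_left (m/((m:ℝ)+1)^2))
  have h4 := h3.tendsto_sum_nat
  convert h4 using 2
  · apply Finset.sum_congr rfl
    intro s _
    simp only [hB, one_div, inv_pow]
    field_simp
    ring
  · field_simp
    ring

end BD
namespace BD

variable {m : ℕ} {x : ℕ → Fin (m+1)}

lemma Normal.avg_z (hx : Normal x) : Avg (z x) (1 / ((m : ℝ)+1)) := by
  have := hx 1 (fun _ => 0)
  rw [pow_one] at this
  convert this using 2 with k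
  unfold z
  congr 1
  simp [funext_iff]

lemma Normal.avg_e (hx : Normal x) (s : ℕ) :
    Avg (e x s) ((A m (s+1) - m * A m s) * (1 / ((m : ℝ)+1))^(s+2)) := by
  apply Avg.shift (s+1)
  rw [← sum_phi]
  convert hx.avg (s+2) (phi s) using 2 with k
  unfold e
  rw [if_pos (by omega), Nat.add_sub_cancel]

lemma Normal.avg_T (hx : Normal x) (L : ℕ) :
    Avg (T x L) ((m / ((m : ℝ)+1))^L) := by
  apply Avg.shift L
  have := hx.avg L (psi L)
  rw [sum_psi, ← mul_pow, mul_one_div] at this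
  convert this using 2 with k
  unfold T
  rw [if_pos (by omega), Nat.add_sub_cancel]

lemma Normal.avg_g (hx : Normal x) : Avg (g x) (1 / ((m : ℝ)+1) + S m / ((m : ℝ)+1)^2) := by
  have hlo := (lo_tendsto m).const_add (1 / ((m : ℝ)+1))
  have hT : Tendsto (fun L : ℕ => (m / ((m : ℝ)+1))^L) atTop (𝓝 0) := by
    apply tendsto_pow_atTop_nhds_zero_of_lt_one (by positivity)
    rw [div_lt_one (by positivity)]; linarith
  have hhi := hlo.add hT
  rw [add_zero] at hhi
  have h1 : ∀ L, Avg (fun k => z x k + ∑ s ∈ Finset.range L, e x s k) _ := fun L =>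
    hx.avg_z.add (Avg.sum (Finset.range L) fun s _ => hx.avg_e s)
  have h2 := fun L => (h1 L).add (hx.avg_T L)
  unfold Avg at *
  rw [tendsto_order] at *
  constructor
  · intro b hb
    obtain ⟨L, hL⟩ := (hlo.1 b hb).exists
    have := (tendsto_order.1 (h1 L)).1 b hL
    filter_upwards [this] with N hN
    refine hN.trans_le ?_
    gcongr
    exact (sandwich x L _).1
  · intro b hb
    obtain ⟨L, hL⟩ := (hhi.2 b hb).exists
    have := (tendsto_order.1 (h2 L)).2 b hL
    filter_upwards [this] with N hN
    refine lt_of_le_of_lt ?_ hN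
    gcongr
    exact (sandwich x L _).2

lemma Normal.D_tendsto (hx : Normal x) :
    Tendsto (fun N : ℕ => (D x N : ℝ) / N) atTop (𝓝 (1 / ((m : ℝ)+1) + S m / ((m : ℝ)+1)^2)) := by
  have := hx.avg_g
  unfold Avg g at this
  refine this.congr fun N => ?_
  rw [Finset.sum_range_sub (fun k => (D x k : ℝ)), D_zero]
  simp

noncomputable def pat (x : ℕ → Fin (m+1)) (v : Fin (m+1)) (k : ℕ) : Prop := x k = 0 ∧ x (k+1) = v

noncomputable def sig (x : ℕ → Fin (m+1)) (v : Fin (m+1)) : ℕ → ℕ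
  | 0 => 0
  | N+1 => if pat x v N then N+1 else sig x v N

noncomputable def cn (x : ℕ → Fin (m+1)) (v : Fin (m+1)) (N : ℕ) : ℝ :=
  ∑ k ∈ Finset.range N, if pat x v k then 1 else 0

lemma cn_sig (v) (N : ℕ) : cn x v (sig x v N) = cn x v N := by
  induction N with
  | zero => rfl
  | succ N ih =>
    simp only [sig]
    split_ifs with h
    · rfl
    · rw [ih]; rw [cn, cn, Finset.sum_range_succ, if_neg h, add_zero]

lemma cn_le (v) (N : ℕ) : cn x v N ≤ N := by
  unfold cn
  refine (Finset.sum_le_sum (g := fun _ => (1:ℝ)) fun i _ => ?_).trans (by simp)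
  split_ifs <;> norm_num

lemma H_ge_sig (v) (N : ℕ) : D x (sig x v N) ≤ H x (N+1) v := by
  induction N with
  | zero => simp [sig, D_zero]
  | succ N ih =>
    simp only [sig]
    split_ifs with h
    · have h1 := H_succ_self_ge x (N+1)
      rw [h.2] at h1
      have h2 := H_succ_zero x h.1
      have h3 := D_succ_zero x h.1
      have := le_max_right (H x (N+1) v) (H x (N+1) 0)
      omega
    · exact ih.trans (H_mono x _ v)

lemma Normal.H_tendsto (hx : Normal x) (v) :
    Tendsto (fun N : ℕ => (H x N v : ℝ) / N) atTop
      (𝓝 (1 / ((m : ℝ)+1) + S m / ((m : ℝ)+1)^2)) := by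
  have hc : Tendsto (fun N : ℕ => cn x v N / N) atTop (𝓝 ((1 / ((m : ℝ)+1))^2)) := by
    have := hx 2 ![0, v]
    unfold Avg at this
    refine this.congr fun N => ?_
    unfold cn
    congr 1
    apply Finset.sum_congr rfl
    intro k _
    have hk : ((fun i : Fin 2 => x (k+i)) = ![0, v]) ↔ pat x v k := by
      simp [funext_iff, Fin.forall_fin_two, pat]
    by_cases h : pat x v k
    · rw [if_pos h]; exact if_pos (hk.2 h)
    · rw [if_neg h]; exact if_neg (fun hh => h (hk.1 hh))
  have hp : 0 < (1 / ((m : ℝ)+1))^2 := by positivity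
  have hcn : Tendsto (fun N : ℕ => cn x v N) atTop atTop := by
    have := hc.pos_mul_atTop hp tendsto_natCast_atTop_atTop
    refine this.congr' ?_
    filter_upwards [eventually_gt_atTop 0] with N hN
    have : (N:ℝ) ≠ 0 := by positivity
    field_simp
  have hsig : Tendsto (sig x v) atTop atTop := by
    rw [← tendsto_natCast_atTop_iff (R := ℝ)]
    refine tendsto_atTop_mono (fun N => ?_) hcn
    rw [← cn_sig]; exact cn_le _ _
  have hratio : Tendsto (fun N : ℕ => (sig x v N : ℝ) / N) atTop (𝓝 1) := by
    have h1 := hc.comp hsig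
    have h2 := hc.div h1 hp.ne'
    rw [div_self hp.ne'] at h2
    refine h2.congr' ?_
    filter_upwards [hcn.eventually_gt_atTop 0, hsig.eventually_gt_atTop 0] with N hN hs
    have hs' : (sig x v N : ℝ) ≠ 0 := by positivity
    simp only [Function.comp, Pi.div_apply, cn_sig]
    field_simp
  have hlow : Tendsto (fun N : ℕ => (D x (sig x v N) : ℝ) / N) atTop
      (𝓝 (1 / ((m : ℝ)+1) + S m / ((m : ℝ)+1)^2)) := by
    have := (hx.D_tendsto.comp hsig).mul hratio
    rw [mul_one] at this
    refine this.congr' ?_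
    filter_upwards [hsig.eventually_gt_atTop 0] with N hs
    have hs' : (sig x v N : ℝ) ≠ 0 := by positivity
    simp only [Function.comp]
    field_simp
  have hlow2 : Tendsto (fun N : ℕ => (D x (sig x v N) : ℝ) / N * ((N:ℝ) / (N + (1:ℝ)))) atTop
      (𝓝 (1 / ((m : ℝ)+1) + S m / ((m : ℝ)+1)^2)) := by
    have := hlow.mul (tendsto_natCast_div_add_atTop (1 : ℝ))
    rwa [mul_one] at this
  rw [← tendsto_add_atTop_iff_nat 1]
  refine tendsto_of_tendsto_of_tendsto_of_le_of_le' hlow2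
    ((tendsto_add_atTop_iff_nat 1).2 hx.D_tendsto) ?_ ?_
  · filter_upwards [eventually_gt_atTop 0] with N hN
    have : (N:ℝ) ≠ 0 := by positivity
    rw [div_mul_div_cancel₀ this]
    push_cast
    gcongr
    exact H_ge_sig v N
  · filter_upwards with N
    gcongr
    exact H_le_D x _ v

end BD
namespace BD
open ProbabilityTheory

section prob
variable {m : ℕ} {Ω : Type} [MeasurableSpace Ω] {μ : Measure Ω} [IsProbabilityMeasure μ]
  {X : ℕ → Ω → Fin (m+1)}

lemma meas_X (hX : IsUniformIID μ X) (k : ℕ) : Measurable (X k) :=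
  measurable_to_countable' fun v => hX.1 k v

lemma box (hX : IsUniformIID μ X) (N : ℕ) (B : ℕ → Finset (Fin (m+1))) :
    μ {ω | ∀ k < N, X k ω ∈ B k} =
      ∏ k ∈ Finset.range N, ((B k).card : ℝ≥0∞) * ((m+1 : ℕ) : ℝ≥0∞)⁻¹ := by
  have hset : {ω | ∀ k < N, X k ω ∈ B k} =
      ⋃ f ∈ Fintype.piFinset (fun k : Fin N => B k), {ω | ∀ k : Fin N, X k ω = f k} := by
    ext ω
    simp only [Set.mem_ofPred_eq, Set.mem_iUnion, Fintype.mem_piFinset, exists_prop]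
    constructor
    · intro h
      exact ⟨fun k => X k ω, fun k => h k k.2, fun k => rfl⟩
    · rintro ⟨f, hf, hf2⟩ k hk
      have := hf ⟨k, hk⟩
      rw [← hf2 ⟨k, hk⟩] at this
      exact this
  rw [hset, measure_biUnion_finset]
  · have : ∀ f : Fin N → Fin (m+1), μ {ω | ∀ k : Fin N, X k ω = f k}
        = ((m+1 : ℕ) : ℝ≥0∞)⁻¹ ^ N := by
      intro f
      have := hX.2 N (fun k => if h : k < N then f ⟨k, h⟩ else 0)
      rw [Fintype.card_fin] at this
      rw [← this]
      congr 1
      ext ω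
      constructor
      · intro h k hk
        simp only [hk, dif_pos]
        exact h ⟨k, hk⟩
      · intro h k
        have := h k k.2
        simpa using this
    simp only [this]
    rw [Finset.sum_const, Fintype.card_piFinset, Finset.prod_mul_distrib, Finset.prod_const,
      Finset.card_range, nsmul_eq_mul]
    push_cast
    rw [Finset.prod_range (fun k => ((B k).card : ℝ≥0∞))]
  · intro f _ f' _ hff
    rw [Function.onFun, Set.disjoint_left]
    intro ω h h'
    apply hff
    funext k
    rw [← h k, ← h' k]
  · intro f _
    rw [Set.ofPred_forall]
    exact MeasurableSet.iInter fun k => hX.1 k (f k)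

lemma box_finset (hX : IsUniformIID μ X) (S : Finset ℕ) (B : ℕ → Finset (Fin (m+1))) :
    μ {ω | ∀ k ∈ S, X k ω ∈ B k} =
      ∏ k ∈ S, ((B k).card : ℝ≥0∞) * ((m+1 : ℕ) : ℝ≥0∞)⁻¹ := by
  have hS : ∀ k ∈ S, k < S.sup id + 1 := fun k hk =>
    Nat.lt_succ_of_le (Finset.le_sup (f := id) hk)
  have := box hX (S.sup id + 1) (fun k => if k ∈ S then B k else Finset.univ)
  have h2 : {ω | ∀ k < S.sup id + 1, X k ω ∈ (if k ∈ S then B k else Finset.univ)}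
      = {ω | ∀ k ∈ S, X k ω ∈ B k} := by
    ext ω
    constructor
    · intro h k hk
      have := h k (hS k hk)
      rwa [if_pos hk] at this
    · intro h k _
      split_ifs with hk
      · exact h k hk
      · simp
  rw [h2] at this
  rw [this]
  symm
  have hsub : S ⊆ Finset.range (S.sup id + 1) := fun k hk => Finset.mem_range.2 (hS k hk)
  rw [← Finset.prod_subset hsub]
  · apply Finset.prod_congr rfl
    intro k hk
    rw [if_pos hk]
  · intro k _ hk
    rw [if_neg hk, Finset.card_univ, Fintype.card_fin]
    exact ENNReal.mul_inv_cancel (by simp) (ENNReal.natCast_ne_top _)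

lemma indep_X (hX : IsUniformIID μ X) : iIndepFun X μ := by
  rw [iIndepFun_iff_measure_inter_preimage_eq_mul]
  intro S sets _
  have h1 := box_finset hX S (fun k => (sets k).toFinset)
  have h2 := fun i => box_finset hX {i} (fun k => (sets k).toFinset)
  simp only [Finset.mem_singleton, forall_eq, Finset.prod_singleton, Set.mem_toFinset] at h1 h2
  have e1 : (⋂ i ∈ S, X i ⁻¹' sets i) = {ω | ∀ k ∈ S, X k ω ∈ sets k} := by
    ext ω; simp
  rw [e1, h1]
  apply Finset.prod_congr rfl
  intro i _
  rw [← h2 i]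
  rfl

/-- indicator of the pattern `u` at position `k`. -/
noncomputable def Y (X : ℕ → Ω → Fin (m+1)) {l : ℕ} (u : Fin l → Fin (m+1)) (k : ℕ) (ω : Ω) : ℝ :=
  if (fun i : Fin l => X (k+i) ω) = u then 1 else 0

lemma meas_pat (hX : IsUniformIID μ X) {l : ℕ} (u : Fin l → Fin (m+1)) (k : ℕ) :
    MeasurableSet {ω | (fun i : Fin l => X (k+i) ω) = u} := by
  simp only [funext_iff, Set.ofPred_forall]
  exact MeasurableSet.iInter fun i => hX.1 (k+i) (u i)

lemma prob_pat (hX : IsUniformIID μ X) {l : ℕ} (u : Fin l → Fin (m+1)) (k : ℕ) :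
    μ {ω | (fun i : Fin l => X (k+i) ω) = u} = (((m+1 : ℕ) : ℝ≥0∞)⁻¹)^l := by
  have := box_finset hX (Finset.Ico k (k+l))
    (fun j => if h : j - k < l then {u ⟨j-k, h⟩} else Finset.univ)
  rw [Finset.prod_congr rfl (g := fun _ => ((m+1 : ℕ) : ℝ≥0∞)⁻¹)] at this
  · rw [Finset.prod_const, Nat.card_Ico, Nat.add_sub_cancel_left] at this
    rw [← this]
    congr 1
    ext ω
    simp only [Set.mem_ofPred_eq, funext_iff, Finset.mem_Ico]
    constructor
    · intro h j hj
      have hj' : j - k < l := by omega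
      rw [dif_pos hj', Finset.mem_singleton, ← h ⟨j-k, hj'⟩]
      congr 1
      simp only
      omega
    · intro h i
      have := h (k+i) ⟨by omega, by omega⟩
      simpa using this
  · intro j hj
    rw [Finset.mem_Ico] at hj
    rw [dif_pos (show j - k < l by omega)]
    simp

lemma meas_Y (hX : IsUniformIID μ X) {l : ℕ} (u : Fin l → Fin (m+1)) (k : ℕ) :
    Measurable (Y X u k) :=
  Measurable.ite (meas_pat hX u k) measurable_const measurable_const

lemma Y_eq {l : ℕ} (u : Fin l → Fin (m+1)) (k : ℕ) :
    Y X u k = Set.indicator {ω | (fun i : Fin l => X (k+i) ω) = u} (fun _ => (1:ℝ)) := by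
  funext ω
  simp [Y, Set.indicator]

lemma ident_Y (hX : IsUniformIID μ X) {l : ℕ} (u : Fin l → Fin (m+1)) (k k' : ℕ) :
    IdentDistrib (Y X u k) (Y X u k') μ μ := by
  refine ⟨(meas_Y hX u k).aemeasurable, (meas_Y hX u k').aemeasurable, ?_⟩
  ext s hs
  rw [Measure.map_apply (meas_Y hX u k) hs, Measure.map_apply (meas_Y hX u k') hs, Y_eq, Y_eq]
  classical
  rw [Set.indicator_const_preimage_eq_union, Set.indicator_const_preimage_eq_union]
  have hc : μ {ω | (fun i : Fin l => X (k+i) ω) = u}ᶜ = μ {ω | (fun i : Fin l => X (k'+i) ω) = u}ᶜ := by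
    rw [prob_compl_eq_one_sub (meas_pat hX u k), prob_compl_eq_one_sub (meas_pat hX u k'),
      prob_pat hX, prob_pat hX]
  by_cases h1 : (1:ℝ) ∈ s <;> by_cases h0 : (0:ℝ) ∈ s <;> simp [h1, h0, hc, prob_pat hX]

lemma integral_Y (hX : IsUniformIID μ X) {l : ℕ} (u : Fin l → Fin (m+1)) (k : ℕ) :
    ∫ ω, Y X u k ω ∂μ = (1 / ((m : ℝ)+1))^l := by
  rw [Y_eq, integral_indicator_const _ (meas_pat hX u k), Measure.real, prob_pat hX,
    ENNReal.toReal_pow, ENNReal.toReal_inv, ENNReal.toReal_natCast]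
  simp

lemma integrable_Y (hX : IsUniformIID μ X) {l : ℕ} (u : Fin l → Fin (m+1)) (k : ℕ) :
    Integrable (Y X u k) μ := by
  rw [Y_eq]
  exact (integrable_const _).indicator (meas_pat hX u k)

lemma indep_Y (hX : IsUniformIID μ X) {l : ℕ} (u : Fin l → Fin (m+1)) (k k' : ℕ) (h : k + l ≤ k') :
    IndepFun (Y X u k) (Y X u k') μ := by
  have hd : Disjoint (Finset.Ico k (k+l)) (Finset.Ico k' (k'+l)) := by
    rw [Finset.disjoint_left]
    intro i hi hi'
    rw [Finset.mem_Ico] at hi hi'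
    omega
  have := (indep_X hX).indepFun_finset _ _ hd (meas_X hX)
  have hY : ∀ k, Y X u k = (fun w : (Finset.Ico k (k+l)) → Fin (m+1) =>
      if (fun i : Fin l => w ⟨k+i, by simp⟩) = u then (1:ℝ) else 0) ∘
      (fun ω (i : Finset.Ico k (k+l)) => X i ω) := by
    intro k
    rfl
  rw [hY k, hY k']
  exact this.comp (Measurable.of_discrete) (Measurable.of_discrete)

lemma strong (hX : IsUniformIID μ X) {l : ℕ} (hl : 0 < l) (u : Fin l → Fin (m+1)) (r : ℕ) :
    ∀ᵐ ω ∂μ, Avg (fun j => Y X u (j*l+r) ω) ((1 / ((m : ℝ)+1))^l) := by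
  have := strong_law_ae_real (μ := μ) (fun j => Y X u (j*l+r)) (integrable_Y hX u _) ?_
    (fun i => ident_Y hX u _ _)
  · rw [integral_Y hX] at this
    exact this
  · intro i j hij
    simp only [Function.onFun]
    rcases lt_or_gt_of_ne hij with h | h
    · apply indep_Y hX
      have : (i+1)*l ≤ j*l := Nat.mul_le_mul_right l h
      linarith [Nat.succ_mul i l]
    · apply IndepFun.symm
      apply indep_Y hX
      have : (j+1)*l ≤ i*l := Nat.mul_le_mul_right l h
      linarith [Nat.succ_mul j l]

lemma sum_blocks (y : ℕ → ℝ) (l M : ℕ) : ∑ k ∈ Finset.range (M*l), y k =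
    ∑ r ∈ Finset.range l, ∑ j ∈ Finset.range M, y (j*l+r) := by
  induction M with
  | zero => simp
  | succ M ih =>
    rw [Nat.succ_mul, Finset.sum_range_add, ih, ← Finset.sum_add_distrib]
    apply Finset.sum_congr rfl
    intro r _
    rw [Finset.sum_range_succ]

lemma avg_of_blocks (y : ℕ → ℝ) (hy : ∀ k, 0 ≤ y k) {l : ℕ} (hl : 0 < l) {p : ℝ}
    (h : ∀ r < l, Avg (fun j => y (j*l+r)) p) : Avg y p := by
  unfold Avg
  apply tendsto_div_of_monotone_of_exists_subseq_tendsto_div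
    (fun N => ∑ k ∈ Finset.range N, y k)
  · intro N N' hN
    exact Finset.sum_le_sum_of_subset_of_nonneg (Finset.range_mono hN) fun i _ _ => hy i
  · intro b hb
    refine ⟨fun M => M*l, ?_, ?_, ?_⟩
    · filter_upwards [eventually_ge_atTop (⌈1/(b-1)⌉₊)] with M hM
      have h1 : 1/(b-1) ≤ (M:ℝ) := (Nat.le_ceil _).trans (by exact_mod_cast hM)
      rw [div_le_iff₀ (by linarith)] at h1
      push_cast
      rw [← mul_assoc]
      gcongr
      linarith
    · exact tendsto_id.atTop_mul_const' hl
    · have := tendsto_finsetSum (Finset.range l) (fun r hr => h r (Finset.mem_range.1 hr))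
      have := this.div_const (l:ℝ)
      have hl' : (l:ℝ) ≠ 0 := by positivity
      rw [Finset.sum_const, Finset.card_range, nsmul_eq_mul, mul_div_cancel_left₀ _ hl'] at this
      refine this.congr fun M => ?_
      simp only
      rw [sum_blocks, ← Finset.sum_div, div_div]
      push_cast
      rfl

lemma normal_ae (hX : IsUniformIID μ X) : ∀ᵐ ω ∂μ, Normal (fun k => X k ω) := by
  unfold Normal
  rw [ae_all_iff]
  intro l
  rw [ae_all_iff]
  intro u
  rcases Nat.eq_zero_or_pos l with rfl | hl
  · filter_upwards with ω
    unfold Avg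
    refine tendsto_const_nhds.congr' ?_
    filter_upwards [eventually_gt_atTop 0] with N hN
    have : (N:ℝ) ≠ 0 := by positivity
    simp [Subsingleton.elim _ u, this]
  · have : ∀ᵐ ω ∂μ, ∀ r, Avg (fun j => Y X u (j*l+r) ω) ((1 / ((m : ℝ)+1))^l) := by
      rw [ae_all_iff]
      exact fun r => strong hX hl u r
    filter_upwards [this] with ω hω
    refine avg_of_blocks _ (fun k => ?_) hl (fun r _ => hω r)
    split_ifs <;> norm_num

end prob
end BD

theorem stmt5 (n : ℕ) (hn : 3 ≤ n) :
    IsGrowthRate (starGraph n)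
      (1 + (1 / (n : ℝ)) * ∑' k : ℕ, (a (n - 1) (k + 1) : ℝ) / (n : ℝ) ^ (k + 1)) := by
  obtain ⟨m, rfl⟩ : ∃ m, n = m + 1 := ⟨n - 1, by omega⟩
  have hS : (∑' k : ℕ, (a (m + 1 - 1) (k + 1) : ℝ) / ((m + 1 : ℕ) : ℝ) ^ (k + 1)) = BD.S m := by
    unfold BD.S
    push_cast
    rfl
  rw [hS]
  have hm : (0:ℝ) < (m:ℝ) + 1 := by positivity
  have hS0 : 0 ≤ BD.S m := by
    unfold BD.S
    exact tsum_nonneg fun k => by positivity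
  refine ⟨by positivity, ?_⟩
  intro Ω _ μ _ X hX
  have key : ∀ᵐ ω ∂μ, ∀ v : Fin (m+1), Tendsto (fun N : ℕ => ((m:ℝ)+1) *
      (heightProcess (starGraph (m+1)) (fun _ => 0) (fun k => X k ω) N v : ℝ) / N) atTop
      (𝓝 (1 + (1 / ((m + 1 : ℕ) : ℝ)) * BD.S m)) := by
    filter_upwards [BD.normal_ae hX] with ω hω v
    have := (hω.H_tendsto v).const_mul ((m:ℝ)+1)
    convert this using 2
    · rw [mul_div_assoc]; rfl
    · push_cast
      field_simp
  constructor
  · filter_upwards [key] with ω hω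
    have := Tendsto.finset_sup'_nhds_apply (s := Finset.univ) Finset.univ_nonempty
      (fun v (_ : v ∈ (Finset.univ : Finset (Fin (m+1)))) => hω v)
    rw [Finset.sup'_const] at this
    refine this.congr fun N => ?_
    rw [Finset.sup'_univ_eq_ciSup, Fintype.card_fin, mul_div_assoc, mul_comm, div_mul_eq_mul_div,
      mul_div_assoc, Real.iSup_mul_of_nonneg (by positivity)]
    congr 1
    funext v
    push_cast
    ring
  · filter_upwards [key] with ω hω
    have := Tendsto.finset_inf'_nhds_apply (s := Finset.univ) Finset.univ_nonempty
      (fun v (_ : v ∈ (Finset.univ : Finset (Fin (m+1)))) => hω v)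
    rw [Finset.inf'_const] at this
    refine this.congr fun N => ?_
    rw [Finset.inf'_univ_eq_ciInf, Fintype.card_fin, mul_div_assoc, mul_comm, div_mul_eq_mul_div,
      mul_div_assoc, Real.iInf_mul_of_nonneg (by positivity)]
    congr 1
    funext v
    push_cast
    ring
end

section
/- Let γ_n denote the growth rate of the star graph S_n for n ≥ 3. Then γ_n · log(log n)/log n → 1 as n → ∞; in particular γ_n → ∞ as n → ∞. (Proposition 2: γ(S_n) ∼ log(n)/log(log(n)).) -/
open MeasureTheory Filter Topology
open scoped ENNReal Classical

section Aux

/-- One deposition step at vertex `x`. -/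
noncomputable def stepAt {V : Type*} [Fintype V] (G : SimpleGraph V) (x : V) (H : V → ℕ) : V → ℕ :=
  fun z => if z = x then
      1 + Finset.univ.sup (fun y => if y = z ∨ G.Adj z y then H y else 0)
    else H z

theorem heightProcess_succ {V : Type*} [Fintype V] (G : SimpleGraph V) (h0 : V → ℕ) (X : ℕ → V)
    (m : ℕ) : heightProcess G h0 X (m + 1) = stepAt G (X m) (heightProcess G h0 X m) := by
  rfl

theorem stepAt_ne {V : Type*} [Fintype V] (G : SimpleGraph V) {x z : V} (H : V → ℕ) (h : z ≠ x) :
    stepAt G x H z = H z := by simp [stepAt, h]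

theorem stepAt_self {V : Type*} [Fintype V] (G : SimpleGraph V) (x : V) (H : V → ℕ) :
    stepAt G x H x = 1 + Finset.univ.sup (fun y => if y = x ∨ G.Adj x y then H y else 0) := by
  simp [stepAt]

theorem stepAt_self_ge {V : Type*} [Fintype V] (G : SimpleGraph V) (x y : V) (H : V → ℕ)
    (h : y = x ∨ G.Adj x y) : 1 + H y ≤ stepAt G x H x := by
  rw [stepAt_self]
  have := Finset.le_sup (f := fun y => if y = x ∨ G.Adj x y then H y else 0) (Finset.mem_univ y)
  simp only [h, if_true] at this
  omega

theorem stepAt_mono {V : Type*} [Fintype V] (G : SimpleGraph V) (x z : V) (H : V → ℕ) :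
    H z ≤ stepAt G x H z := by
  by_cases h : z = x
  · subst h
    have := stepAt_self_ge G z z H (Or.inl rfl)
    omega
  · rw [stepAt_ne G H h]

theorem stepAt_self_le {V : Type*} [Fintype V] (G : SimpleGraph V) (x : V) (H : V → ℕ) (M : ℕ)
    (h : ∀ y, y = x ∨ G.Adj x y → H y ≤ M) : stepAt G x H x ≤ 1 + M := by
  rw [stepAt_self]
  gcongr
  apply Finset.sup_le
  intro y _
  split_ifs with hy
  · exact h y hy
  · exact Nat.zero_le _

theorem star_adj {n : ℕ} [NeZero n] (x y : Fin n) :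
    (starGraph n).Adj x y ↔ x ≠ y ∧ (x = 0 ∨ y = 0) := by
  have h : ∀ x : Fin n, (x : ℕ) = 0 ↔ x = 0 := fun x => by rw [Fin.ext_iff, Fin.val_zero]
  rw [starGraph, SimpleGraph.fromRel_adj, h, h]

/-- Averaging operator. -/
noncomputable def avg {V : Type*} [Fintype V] (G : SimpleGraph V) (Q : (V → ℕ) → ℝ) :
    (V → ℕ) → ℝ := fun H => (Fintype.card V : ℝ)⁻¹ * ∑ x, Q (stepAt G x H)

/-- Maximal height. -/
noncomputable def maxH {V : Type*} (H : V → ℕ) : ℝ := ⨆ x, (H x : ℝ)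

theorem le_maxH {V : Type*} [Fintype V] (H : V → ℕ) (x : V) : (H x : ℝ) ≤ maxH H :=
  le_ciSup (f := fun x => (H x : ℝ)) (Set.finite_range _).bddAbove x

theorem maxH_le {V : Type*} [Nonempty V] (H : V → ℕ) (M : ℝ) (h : ∀ x, (H x : ℝ) ≤ M) :
    maxH H ≤ M := ciSup_le h

theorem avg_mono {V : Type*} [Fintype V] (G : SimpleGraph V) {Q R : (V → ℕ) → ℝ}
    (h : ∀ H, Q H ≤ R H) (H : V → ℕ) : avg G Q H ≤ avg G R H := by
  unfold avg
  gcongr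
  exact h _

theorem avg_iter_mono {V : Type*} [Fintype V] (G : SimpleGraph V) (m : ℕ) {Q R : (V → ℕ) → ℝ}
    (h : ∀ H, Q H ≤ R H) (H : V → ℕ) : (avg G)^[m] Q H ≤ (avg G)^[m] R H := by
  induction m generalizing Q R with
  | zero => exact h H
  | succ m ih => exact ih (avg_mono G h)

theorem avg_iter_add {V : Type*} [Fintype V] [Nonempty V] (G : SimpleGraph V) (m : ℕ)
    (Q : (V → ℕ) → ℝ) (c : ℝ) (H : V → ℕ) :
    (avg G)^[m] (fun H => Q H + c) H = (avg G)^[m] Q H + c := by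
  induction m generalizing Q with
  | zero => rfl
  | succ m ih =>
    rw [Function.iterate_succ_apply, Function.iterate_succ_apply, ← ih]
    refine congrFun (congrArg _ (funext fun H => ?_)) _
    have : (Fintype.card V : ℝ) ≠ 0 := by simp
    simp only [avg, Finset.sum_add_distrib, Finset.sum_const, Finset.card_univ, nsmul_eq_mul]
    field_simp

/-- If every step satisfies a bound then so does the average. -/
theorem le_avg_of {V : Type*} [Fintype V] [Nonempty V] (G : SimpleGraph V) (Q : (V → ℕ) → ℝ)
    (H : V → ℕ) (f : V → ℝ) (c : ℝ) (h : ∀ x, f x ≤ Q (stepAt G x H))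
    (hc : (Fintype.card V : ℝ) * c ≤ ∑ x, f x) : c ≤ avg G Q H := by
  unfold avg
  have : 0 < (Fintype.card V : ℝ) := by exact_mod_cast Fintype.card_pos
  rw [inv_mul_eq_div, le_div_iff₀ this]
  have := Finset.sum_le_sum (fun x (_ : x ∈ Finset.univ) => h x)
  linarith

theorem avg_le_of {V : Type*} [Fintype V] [Nonempty V] (G : SimpleGraph V) (Q : (V → ℕ) → ℝ)
    (H : V → ℕ) (f : V → ℝ) (c : ℝ) (h : ∀ x, Q (stepAt G x H) ≤ f x)
    (hc : ∑ x, f x ≤ (Fintype.card V : ℝ) * c) : avg G Q H ≤ c := by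
  unfold avg
  have : 0 < (Fintype.card V : ℝ) := by exact_mod_cast Fintype.card_pos
  rw [inv_mul_eq_div, div_le_iff₀ this]
  have := Finset.sum_le_sum (fun x (_ : x ∈ Finset.univ) => h x)
  linarith

/-! ### Upper bound -/

/-- Exponential sum over the leaves. -/
noncomputable def expS {n : ℕ} [NeZero n] (l : ℝ) (H : Fin n → ℕ) : ℝ :=
  ∑ i ∈ Finset.univ.erase (0 : Fin n), l ^ (max (H i) (H 0))

theorem expS_ge {n : ℕ} [NeZero n] (hn : 3 ≤ n) {l : ℝ} (hl : 1 < l) (H : Fin n → ℕ) (x : Fin n) :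
    l ^ (H x) ≤ expS l H := by
  have key : ∀ i : Fin n, i ≠ 0 → l ^ (max (H i) (H 0)) ≤ expS l H := by
    intro i hi
    exact Finset.single_le_sum (f := fun i => l ^ (max (H i) (H 0)))
      (fun _ _ => by positivity) (by simp [hi])
  by_cases hx : x = 0
  · subst hx
    have : (⟨1, by omega⟩ : Fin n) ≠ 0 := by simp [Fin.ext_iff]
    refine le_trans ?_ (key _ this)
    exact pow_le_pow_right₀ hl.le (le_max_right _ _)
  · exact le_trans (pow_le_pow_right₀ hl.le (le_max_left _ _)) (key x hx)

theorem expS_pos {n : ℕ} [NeZero n] (hn : 3 ≤ n) {l : ℝ} (hl : 1 < l) (H : Fin n → ℕ) :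
    0 < expS l H := lt_of_lt_of_le (by positivity) (expS_ge hn hl H 0)

theorem expS_center {n : ℕ} [NeZero n] (hn : 3 ≤ n) {l : ℝ} (hl : 1 < l) (H : Fin n → ℕ) :
    expS l (stepAt (starGraph n) 0 H) ≤ n * l * expS l H := by
  obtain ⟨x, -, hx⟩ := Finset.exists_max_image Finset.univ H ⟨0, Finset.mem_univ _⟩
  have h0 : stepAt (starGraph n) 0 H 0 ≤ 1 + H x :=
    stepAt_self_le _ _ _ _ (fun y _ => hx y (Finset.mem_univ _))
  have h1 : ∀ i ∈ Finset.univ.erase (0 : Fin n),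
      l ^ (max (stepAt (starGraph n) 0 H i) (stepAt (starGraph n) 0 H 0)) ≤ l * expS l H := by
    intro i hi
    have hi0 : i ≠ 0 := by simpa using hi
    rw [stepAt_ne _ _ hi0]
    calc l ^ (max (H i) (stepAt (starGraph n) 0 H 0)) ≤ l ^ (1 + H x) := by
          apply pow_le_pow_right₀ hl.le
          have := hx i (Finset.mem_univ _)
          omega
      _ = l * l ^ (H x) := by ring
      _ ≤ _ := by
          have := expS_ge hn hl H x
          gcongr
  have h2 := Finset.sum_le_card_nsmul _ _ _ h1
  have hp : 0 < l * expS l H := mul_pos (by linarith) (expS_pos hn hl H)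
  refine le_trans h2 ?_
  rw [nsmul_eq_mul, mul_assoc]
  apply mul_le_mul_of_nonneg_right _ hp.le
  have : (Finset.univ.erase (0 : Fin n)).card ≤ n := by
    simp
  exact_mod_cast this

theorem expS_leaf {n : ℕ} [NeZero n] {l : ℝ} (hl : 1 < l) (H : Fin n → ℕ)
    (x : Fin n) (hx : x ≠ 0) :
    expS l (stepAt (starGraph n) x H) ≤ expS l H + (l - 1) * l ^ (max (H x) (H 0)) := by
  have hxm : x ∈ Finset.univ.erase (0 : Fin n) := by simp [hx]
  unfold expS
  rw [← Finset.add_sum_erase _ _ hxm, ← Finset.add_sum_erase _ _ hxm, stepAt_ne _ _ hx.symm]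
  have h1 : ∑ i ∈ (Finset.univ.erase (0 : Fin n)).erase x,
      l ^ (max (stepAt (starGraph n) x H i) (H 0)) =
      ∑ i ∈ (Finset.univ.erase (0 : Fin n)).erase x, l ^ (max (H i) (H 0)) := by
    apply Finset.sum_congr rfl
    intro i hi
    rw [stepAt_ne]
    exact (Finset.mem_erase.1 hi).1
  rw [h1]
  have h2 : stepAt (starGraph n) x H x ≤ 1 + max (H x) (H 0) := by
    apply stepAt_self_le
    intro y hy
    rcases hy with rfl | hy
    · exact le_max_left _ _
    · rw [star_adj] at hy
      rcases hy.2 with h | rfl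
      · exact absurd h hx
      · exact le_max_right _ _
  have h3 : l ^ (max (stepAt (starGraph n) x H x) (H 0)) ≤ l ^ (1 + max (H x) (H 0)) := by
    apply pow_le_pow_right₀ hl.le
    have := le_max_right (H x) (H 0)
    omega
  rw [pow_add, pow_one] at h3
  linarith

theorem upper_step {n : ℕ} [NeZero n] (hn : 3 ≤ n) {l : ℝ} (hl : 1 < l) (H : Fin n → ℕ) :
    ∑ x, Real.log (expS l (stepAt (starGraph n) x H)) ≤
      n * Real.log (expS l H) + (Real.log n + Real.log l + (l - 1)) := by
  have hS := expS_pos hn hl H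
  have hnp : (0 : ℝ) < n := by exact_mod_cast (by omega : 0 < n)
  rw [← Finset.add_sum_erase _ _ (Finset.mem_univ (0 : Fin n))]
  have h0 : Real.log (expS l (stepAt (starGraph n) 0 H)) ≤
      Real.log n + Real.log l + Real.log (expS l H) := by
    rw [← Real.log_mul hnp.ne' (by linarith), ← Real.log_mul (by positivity) hS.ne']
    exact Real.log_le_log (expS_pos hn hl _) (expS_center hn hl H)
  have h1 : ∀ i ∈ Finset.univ.erase (0 : Fin n),
      Real.log (expS l (stepAt (starGraph n) i H)) ≤
        Real.log (expS l H) + (l - 1) * (l ^ (max (H i) (H 0)) / expS l H) := by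
    intro i hi
    have hi0 : i ≠ 0 := by simpa using hi
    have h2 := expS_leaf hl H i hi0
    have hq : 0 < (l - 1) * (l ^ (max (H i) (H 0)) / expS l H) := by
      have : 0 < l - 1 := by linarith
      positivity
    have h3 : expS l (stepAt (starGraph n) i H) ≤
        expS l H * (1 + (l - 1) * (l ^ (max (H i) (H 0)) / expS l H)) := by
      refine h2.trans (le_of_eq ?_)
      field_simp
    have h4 := Real.log_le_log (expS_pos hn hl _) h3
    rw [Real.log_mul hS.ne' (by linarith)] at h4
    have h5 := Real.log_le_sub_one_of_pos (show 0 < 1 + (l - 1) * (l ^ (max (H i) (H 0)) / expS l H) by linarith)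
    linarith
  have h2 := Finset.sum_le_sum h1
  rw [Finset.sum_add_distrib, ← Finset.mul_sum, ← Finset.sum_div, Finset.sum_const,
    Finset.card_erase_of_mem (Finset.mem_univ _), Finset.card_univ, Fintype.card_fin,
    nsmul_eq_mul] at h2
  have h3 : (∑ i ∈ Finset.univ.erase (0 : Fin n), l ^ (max (H i) (H 0))) / expS l H = 1 :=
    div_self hS.ne'
  rw [h3] at h2
  push_cast [show 1 ≤ n by omega] at h2
  linarith

theorem upper_iter {n : ℕ} [NeZero n] (hn : 3 ≤ n) {l : ℝ} (hl : 1 < l) (m : ℕ) (H : Fin n → ℕ) :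
    (avg (starGraph n))^[m] maxH H ≤ Real.log (expS l H) / Real.log l +
      m * ((Real.log n + Real.log l + (l - 1)) / Real.log l / n) := by
  have hll : 0 < Real.log l := Real.log_pos hl
  have hnp : (0 : ℝ) < n := by exact_mod_cast (by omega : 0 < n)
  induction m generalizing H with
  | zero =>
    simp only [Function.iterate_zero, id, Nat.cast_zero, zero_mul, add_zero]
    apply maxH_le
    intro x
    rw [le_div_iff₀ hll, ← Real.log_pow]
    exact Real.log_le_log (by positivity) (expS_ge hn hl H x)
  | succ m ih =>
    rw [Function.iterate_succ_apply']
    refine avg_le_of _ _ _ _ _ (fun x => ih _) ?_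
    rw [Finset.sum_add_distrib, ← Finset.sum_div]
    simp only [Finset.sum_const, Finset.card_univ, Fintype.card_fin, nsmul_eq_mul]
    have h := upper_step hn hl H
    have h2 : (∑ x, Real.log (expS l (stepAt (starGraph n) x H))) / Real.log l ≤
      (n * Real.log (expS l H) + (Real.log n + Real.log l + (l - 1))) / Real.log l := by
      gcongr
    refine (add_le_add_left h2 _).trans (le_of_eq ?_)
    push_cast
    field_simp
    ring

/-! ### Lower bound -/

theorem prod_ineq {V : Type*} (t : ℝ) (ht0 : 0 ≤ t) (ht1 : t ≤ 1) (a b : V → ℝ)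
    (hb : ∀ x, 0 ≤ b x) (hab : ∀ x, b x ≤ a x) (s : Finset V) :
    ∏ y ∈ s, a y - t * ∑ x ∈ s, (∏ y ∈ s, a y - ∏ y ∈ s, if y = x then b y else a y) ≤
      ∏ y ∈ s, ((1 - t) * a y + t * b y) := by
  induction s using Finset.induction_on with
  | empty => simp
  | insert z s hz ih =>
    have ha : ∀ x, 0 ≤ a x := fun x => (hb x).trans (hab x)
    have hR : ∏ y ∈ s, ((1 - t) * a y + t * b y) ≤ ∏ y ∈ s, a y := by
      apply Finset.prod_le_prod
      · intro i _
        have := ha i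
        have := hb i
        have : 0 ≤ 1 - t := by linarith
        positivity
      · intro i _
        have := mul_le_mul_of_nonneg_left (hab i) ht0
        linarith
    rw [Finset.prod_insert hz, Finset.prod_insert hz, Finset.sum_insert hz]
    have e1 : (∏ y ∈ insert z s, if y = z then b y else a y) = b z * ∏ y ∈ s, a y := by
      rw [Finset.prod_insert hz, if_pos rfl]
      congr 1
      apply Finset.prod_congr rfl
      intro y hy
      rw [if_neg]
      rintro rfl
      exact hz hy
    have e2 : ∑ x ∈ s, (a z * ∏ y ∈ s, a y - ∏ y ∈ insert z s, if y = x then b y else a y) =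
        a z * ∑ x ∈ s, (∏ y ∈ s, a y - ∏ y ∈ s, if y = x then b y else a y) := by
      rw [Finset.mul_sum]
      apply Finset.sum_congr rfl
      intro x hx
      rw [Finset.prod_insert hz, if_neg, mul_sub]
      rintro rfl
      exact hz hx
    rw [e1, e2]
    set P := ∏ y ∈ s, a y
    set R := ∏ y ∈ s, ((1 - t) * a y + t * b y)
    set D := ∑ x ∈ s, (P - ∏ y ∈ s, if y = x then b y else a y)
    have h1 := mul_le_mul_of_nonneg_left ih (ha z)
    have h2 := mul_le_mul_of_nonneg_left hR (mul_nonneg ht0 (sub_nonneg.2 (hab z)))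
    nlinarith

/-- Probability that a bin with `j` balls has fewer than `k` balls after `m` further throws. -/
noncomputable def lightP (t : ℝ) (k : ℕ) : ℕ → ℕ → ℝ
  | 0, j => if j < k then 1 else 0
  | m + 1, j => (1 - t) * lightP t k m j + t * lightP t k m (j + 1)

theorem lightP_nonneg {t : ℝ} (ht0 : 0 ≤ t) (ht1 : t ≤ 1) (k m j : ℕ) : 0 ≤ lightP t k m j := by
  induction m generalizing j with
  | zero => rw [lightP]; split_ifs <;> norm_num
  | succ m ih =>
    rw [lightP]
    have := ih j
    have := ih (j + 1)
    have : 0 ≤ 1 - t := by linarith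
    positivity

theorem lightP_anti {t : ℝ} (ht0 : 0 ≤ t) (ht1 : t ≤ 1) (k m : ℕ) : Antitone (lightP t k m) := by
  induction m with
  | zero =>
    intro i j hij
    simp only [lightP]
    split_ifs <;> first | omega | norm_num
  | succ m ih =>
    intro i j hij
    simp only [lightP]
    have h1 := mul_le_mul_of_nonneg_left (ih hij) (sub_nonneg.2 ht1)
    have h2 := mul_le_mul_of_nonneg_left (ih (Nat.add_le_add_right hij 1)) ht0
    linarith

theorem lightP_le {t : ℝ} (ht0 : 0 ≤ t) (ht1 : t ≤ 1) (k m i j : ℕ) (h : j + i = k) :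
    lightP t k m j ≤ 1 - m.choose i * t ^ i * (1 - t) ^ m := by
  have hs : 0 ≤ 1 - t := by linarith
  have hq : ∀ m, (1 - t) ^ (m + 1) ≤ (1 - t) ^ m :=
    fun m => pow_le_pow_of_le_one hs (by linarith) (Nat.le_succ m)
  have h1 : ∀ m j, lightP t k m j ≤ 1 := by
    intro m
    induction m with
    | zero => intro j; rw [lightP]; split_ifs <;> norm_num
    | succ m ih => intro j; rw [lightP]; nlinarith [ih j, ih (j + 1)]
  induction m generalizing i j with
  | zero =>
    rw [lightP]
    cases i with
    | zero => simp [show ¬ j < k by omega]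
    | succ i => simp [show j < k by omega]
  | succ m ih =>
    rw [lightP]
    cases i with
    | zero =>
      have a1 := mul_le_mul_of_nonneg_left (ih 0 j h) hs
      have a2 : lightP t k m (j + 1) ≤ 1 - (1 - t) ^ m := by
        refine (lightP_anti ht0 ht1 k m (Nat.le_succ j)).trans ?_
        simpa using ih 0 j h
      have a3 := mul_le_mul_of_nonneg_left a2 ht0
      have a4 := hq m
      simp only [Nat.choose_zero_right, Nat.cast_one, pow_zero, one_mul] at *
      nlinarith
    | succ i =>
      have a1 := mul_le_mul_of_nonneg_left (ih (i + 1) j h) hs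
      have a2 := mul_le_mul_of_nonneg_left (ih i (j + 1) (by omega)) ht0
      rw [Nat.choose_succ_succ]
      push_cast
      have a3 : (m.choose i : ℝ) * t ^ (i + 1) * (1 - t) ^ (m + 1) ≤
        (m.choose i : ℝ) * t ^ (i + 1) * (1 - t) ^ m := by
        have := hq m
        gcongr
      calc _ ≤ (1 - t) * (1 - (m.choose (i + 1)) * t ^ (i + 1) * (1 - t) ^ m) +
            t * (1 - (m.choose i) * t ^ i * (1 - t) ^ m) := add_le_add a1 a2
        _ = 1 - (m.choose (i + 1)) * t ^ (i + 1) * (1 - t) ^ (m + 1) -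
            (m.choose i : ℝ) * t ^ (i + 1) * (1 - t) ^ m := by ring
        _ ≤ _ := by linarith

theorem window {n : ℕ} [NeZero n] (k m h : ℕ) (H : Fin n → ℕ) (h0 : h ≤ H 0) :
    h + k * (1 - ∏ x, lightP (n : ℝ)⁻¹ k m (H x - h)) ≤ (avg (starGraph n))^[m] maxH H := by
  have hn1 : (1 : ℝ) ≤ n := by exact_mod_cast NeZero.one_le
  have ht0 : 0 ≤ (n : ℝ)⁻¹ := by positivity
  have ht1 : (n : ℝ)⁻¹ ≤ 1 := inv_le_one_of_one_le₀ hn1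
  induction m generalizing H with
  | zero =>
    simp only [lightP, Function.iterate_zero, id]
    by_cases hx : ∃ x, k ≤ H x - h
    · obtain ⟨x, hx⟩ := hx
      have e : ∏ x, (if H x - h < k then (1 : ℝ) else 0) = 0 := by
        apply Finset.prod_eq_zero (Finset.mem_univ x)
        rw [if_neg (by omega)]
      rw [e, sub_zero, mul_one]
      by_cases hk : k = 0
      · subst hk
        refine le_trans ?_ (le_maxH H 0)
        simpa using h0
      · refine le_trans ?_ (le_maxH H x)
        exact_mod_cast (by omega : h + k ≤ H x)
    · push Not at hx
      have e : ∏ x, (if H x - h < k then (1 : ℝ) else 0) = 1 := by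
        apply Finset.prod_eq_one
        intro x _
        rw [if_pos (hx x)]
      rw [e, sub_self, mul_zero, add_zero]
      refine le_trans ?_ (le_maxH H 0)
      exact_mod_cast h0
  | succ m ih =>
    rw [Function.iterate_succ_apply']
    refine le_avg_of _ _ _ _ _
      (fun x => ih (stepAt (starGraph n) x H) (h0.trans (stepAt_mono _ _ _ _))) ?_
    rw [Finset.sum_add_distrib, ← Finset.mul_sum, Finset.sum_sub_distrib]
    simp only [Finset.sum_const, Finset.card_univ, Fintype.card_fin, nsmul_eq_mul, mul_one]
    set a : Fin n → ℝ := fun x => lightP (n : ℝ)⁻¹ k m (H x - h) with ha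
    set b : Fin n → ℝ := fun x => lightP (n : ℝ)⁻¹ k m (H x - h + 1) with hb
    have hp := prod_ineq (n : ℝ)⁻¹ ht0 ht1 a b (fun x => lightP_nonneg ht0 ht1 _ _ _)
      (fun x => lightP_anti ht0 ht1 k m (Nat.le_succ _)) Finset.univ
    rw [Finset.sum_sub_distrib] at hp
    simp only [Finset.sum_const, Finset.card_univ, Fintype.card_fin, nsmul_eq_mul] at hp
    have hle : ∑ x, ∏ y, lightP (n : ℝ)⁻¹ k m (stepAt (starGraph n) x H y - h) ≤
        ∑ x, ∏ y, (if y = x then b y else a y) := by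
      apply Finset.sum_le_sum
      intro x _
      apply Finset.prod_le_prod
      · intro y _
        exact lightP_nonneg ht0 ht1 _ _ _
      · intro y _
        split_ifs with hyx
        · subst hyx
          apply lightP_anti ht0 ht1
          have h1 := stepAt_self_ge (starGraph n) y y H (Or.inl rfl)
          have h2 : 1 + H 0 ≤ stepAt (starGraph n) y H y := by
            apply stepAt_self_ge
            by_cases hy0 : y = 0
            · exact Or.inl hy0.symm
            · exact Or.inr ((star_adj _ _).2 ⟨hy0, Or.inr rfl⟩)
          omega
        · rw [stepAt_ne _ _ hyx]
    have hnp : (0 : ℝ) < n := by linarith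
    have e : ∏ x, lightP (n : ℝ)⁻¹ k (m + 1) (H x - h) =
        ∏ y, ((1 - (n : ℝ)⁻¹) * a y + (n : ℝ)⁻¹ * b y) := rfl
    rw [e]
    have hp2 : ∑ x, ∏ y, (if y = x then b y else a y) ≤
        n * ∏ y, ((1 - (n : ℝ)⁻¹) * a y + (n : ℝ)⁻¹ * b y) := by
      have := mul_le_mul_of_nonneg_left hp hnp.le
      refine le_trans (le_of_eq ?_) this
      field_simp
      ring
    have hk : (0 : ℝ) ≤ k := Nat.cast_nonneg k
    have := mul_le_mul_of_nonneg_left (hle.trans hp2) hk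
    nlinarith

theorem window' {n : ℕ} [NeZero n] (k w : ℕ) (H : Fin n → ℕ) :
    H 0 + k * (1 - Real.exp (-(n * (w.choose k * (n : ℝ)⁻¹ ^ k * (1 - (n : ℝ)⁻¹) ^ w)))) ≤
      (avg (starGraph n))^[w] maxH H := by
  have hn1 : (1 : ℝ) ≤ n := by exact_mod_cast NeZero.one_le
  have ht0 : 0 ≤ (n : ℝ)⁻¹ := by positivity
  have ht1 : (n : ℝ)⁻¹ ≤ 1 := inv_le_one_of_one_le₀ hn1
  refine le_trans ?_ (window k w (H 0) H le_rfl)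
  gcongr
  have : ∀ x ∈ Finset.univ, lightP (n : ℝ)⁻¹ k w (H x - H 0) ≤
      Real.exp (-((w.choose k * (n : ℝ)⁻¹ ^ k * (1 - (n : ℝ)⁻¹) ^ w))) := by
    intro x _
    refine (lightP_anti ht0 ht1 k w (Nat.zero_le _)).trans ?_
    refine (lightP_le ht0 ht1 k w k 0 (by simp)).trans ?_
    have := Real.add_one_le_exp (-((w.choose k * (n : ℝ)⁻¹ ^ k * (1 - (n : ℝ)⁻¹) ^ w)))
    linarith
  refine (Finset.prod_le_prod (fun x _ => lightP_nonneg ht0 ht1 _ _ _) this).trans ?_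
  rw [Finset.prod_const, ← Real.exp_nat_mul]
  simp

theorem lower_second {n : ℕ} [NeZero n] (a b : ℝ) (ha : 0 ≤ a) (hb : 0 ≤ b) (m : ℕ)
    (hf : ∀ m' < m, ∀ H : Fin n → ℕ, a * m' - b + H 0 ≤ (avg (starGraph n))^[m'] maxH H)
    (H : Fin n → ℕ) : maxH H + (a * m - b - a * n) ≤ (avg (starGraph n))^[m] maxH H := by
  have key : ∀ H : Fin n → ℕ, ∀ y, H y + (a * m - b - a * n) ≤ (avg (starGraph n))^[m] maxH H := by
    induction m with
    | zero =>
      intro H y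
      have := le_maxH H y
      have : 0 ≤ a * n := by positivity
      simp only [Function.iterate_zero, id, Nat.cast_zero, mul_zero]
      linarith
    | succ m ih =>
      have ih := ih (fun m' hm' => hf m' (by omega))
      intro H y
      rw [Function.iterate_succ_apply']
      refine le_avg_of _ _ _
        (fun x => (H y + (a * m - b - a * n)) + if x = 0 then a * n else 0) _ ?_ ?_
      · intro x
        split_ifs with hx
        · subst hx
          have h1 := hf m (Nat.lt_succ_self m) (stepAt (starGraph n) 0 H)
          have h2 : 1 + H y ≤ stepAt (starGraph n) 0 H 0 := by
            apply stepAt_self_ge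
            by_cases hy0 : y = 0
            · exact Or.inl hy0
            · exact Or.inr ((star_adj _ _).2 ⟨fun h => hy0 h.symm, Or.inl rfl⟩)
          have h3 : (1 : ℝ) + H y ≤ stepAt (starGraph n) 0 H 0 := by exact_mod_cast h2
          linarith
        · have h1 := ih (stepAt (starGraph n) x H) y
          have h2 : (H y : ℝ) ≤ stepAt (starGraph n) x H y := by
            exact_mod_cast stepAt_mono _ _ _ _
          linarith
      · rw [Finset.sum_add_distrib]
        simp only [Finset.sum_const, Finset.card_univ, Fintype.card_fin, nsmul_eq_mul,
          Finset.sum_ite_eq', Finset.mem_univ, if_true]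
        push_cast
        apply le_of_eq
        ring
  have : maxH H ≤ (avg (starGraph n))^[m] maxH H - (a * m - b - a * n) :=
    maxH_le _ _ (fun x => by linarith [key H x])
  linarith

theorem lower_iter {n : ℕ} [NeZero n] (a c : ℝ) (w : ℕ) (hw : 1 ≤ w) (ha : 0 ≤ a)
    (hc : ∀ H : Fin n → ℕ, H 0 + c ≤ (avg (starGraph n))^[w] maxH H)
    (hac : a * (n + w) ≤ c) (m : ℕ) (H : Fin n → ℕ) :
    a * m - a * w + H 0 ≤ (avg (starGraph n))^[m] maxH H := by
  induction m using Nat.strong_induction_on generalizing H with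
  | _ m ih =>
    by_cases hm : m < w
    · have : ∀ (m : ℕ) (H : Fin n → ℕ), (H 0 : ℝ) ≤ (avg (starGraph n))^[m] maxH H := by
        intro m
        induction m with
        | zero => intro H; exact le_maxH H 0
        | succ m ih =>
          intro H
          rw [Function.iterate_succ_apply']
          refine le_avg_of _ _ _ (fun _ => (H 0 : ℝ)) _ (fun x => ?_) (by simp)
          refine le_trans ?_ (ih _)
          exact_mod_cast stepAt_mono _ _ _ _
      have h1 := this m H
      have h2 : a * m ≤ a * w := by gcongr
      linarith
    · obtain ⟨r, rfl⟩ : ∃ r, m = w + r := ⟨m - w, by omega⟩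
      rw [Function.iterate_add_apply]
      have h1 := lower_second a (a * w) ha (by positivity) r (fun m' hm' => ih m' (by omega))
      have h2 := avg_iter_mono (starGraph n) w h1 H
      rw [avg_iter_add] at h2
      have h3 := hc H
      push_cast
      linarith

/-! ### Expectations -/

/-- Extend a finite tuple to a sequence. -/
noncomputable def extSeq {n : ℕ} [NeZero n] {m : ℕ} (f : Fin m → Fin n) : ℕ → Fin n :=
  fun k => if h : k < m then f ⟨k, h⟩ else 0

theorem heightProcess_congr {V : Type*} [Fintype V] (G : SimpleGraph V) (h0 : V → ℕ)
    (X Y : ℕ → V) (m : ℕ) (h : ∀ k < m, X k = Y k) :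
    heightProcess G h0 X m = heightProcess G h0 Y m := by
  induction m with
  | zero => rfl
  | succ m ih =>
    rw [heightProcess_succ, heightProcess_succ, ih (fun k hk => h k (by omega)),
      h m (Nat.lt_succ_self m)]

theorem sum_tuple {n : ℕ} [NeZero n] (G : SimpleGraph (Fin n)) (h0 : Fin n → ℕ) (m : ℕ)
    (Q : (Fin n → ℕ) → ℝ) :
    ∑ f : Fin m → Fin n, (n : ℝ)⁻¹ ^ m * Q (heightProcess G h0 (extSeq f) m) =
      (avg G)^[m] Q h0 := by
  induction m generalizing Q with
  | zero => simp [heightProcess]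
  | succ m ih =>
    rw [Function.iterate_succ_apply, ← ih, ← (Fin.snocEquiv (fun _ => Fin n)).sum_comp,
      Fintype.sum_prod_type_right]
    apply Finset.sum_congr rfl
    intro f _
    simp only [avg, Fintype.card_fin]
    rw [← mul_assoc, ← pow_succ, Finset.mul_sum]
    apply Finset.sum_congr rfl
    intro x _
    rw [heightProcess_succ]
    have h1 : extSeq (Fin.snocEquiv (fun _ => Fin n) (x, f)) m = x := by
      simp only [extSeq, Fin.snocEquiv]
      rw [dif_pos (Nat.lt_succ_self m)]
      exact Fin.snoc_last (α := fun _ => Fin n) x f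
    have h2 : heightProcess G h0 (extSeq (Fin.snocEquiv (fun _ => Fin n) (x, f))) m =
        heightProcess G h0 (extSeq f) m := by
      apply heightProcess_congr
      intro k hk
      simp only [extSeq, Fin.snocEquiv]
      rw [dif_pos (Nat.lt_succ_of_lt hk), dif_pos hk]
      exact Fin.snoc_castSucc (α := fun _ => Fin n) x f ⟨k, hk⟩
    rw [h1, h2]

theorem measurable_tuple {n : ℕ} {Ω : Type} [MeasurableSpace Ω] (μ : Measure Ω)
    (X : ℕ → Ω → Fin n) (hX : IsUniformIID μ X) (m : ℕ) :
    Measurable (fun ω => fun k : Fin m => X k ω) := by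
  rw [measurable_pi_iff]
  intro k
  apply measurable_to_countable'
  intro v
  exact hX.1 k v

theorem height_factor {n : ℕ} [NeZero n] {Ω : Type} (X : ℕ → Ω → Fin n) (G : SimpleGraph (Fin n))
    (h0 : Fin n → ℕ) (m : ℕ) (ω : Ω) :
    heightProcess G h0 (fun k => X k ω) m =
      heightProcess G h0 (extSeq (fun k : Fin m => X k ω)) m := by
  apply heightProcess_congr
  intro k hk
  simp [extSeq, hk]

theorem measurable_height {n : ℕ} [NeZero n] {Ω : Type} [MeasurableSpace Ω] (μ : Measure Ω)
    (X : ℕ → Ω → Fin n) (hX : IsUniformIID μ X) (G : SimpleGraph (Fin n)) (h0 : Fin n → ℕ) (m : ℕ)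
    (Q : (Fin n → ℕ) → ℝ) : Measurable (fun ω => Q (heightProcess G h0 (fun k => X k ω) m)) := by
  simp only [height_factor]
  exact (measurable_of_finite (fun f : Fin m → Fin n => Q (heightProcess G h0 (extSeq f) m))).comp
    (measurable_tuple μ X hX m)

theorem integral_height {n : ℕ} [NeZero n] {Ω : Type} [MeasurableSpace Ω] (μ : Measure Ω)
    [IsProbabilityMeasure μ]
    (X : ℕ → Ω → Fin n) (hX : IsUniformIID μ X) (G : SimpleGraph (Fin n)) (h0 : Fin n → ℕ) (m : ℕ)
    (Q : (Fin n → ℕ) → ℝ) :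
    ∫ ω, Q (heightProcess G h0 (fun k => X k ω) m) ∂μ = (avg G)^[m] Q h0 := by
  rw [← sum_tuple]
  simp only [height_factor X]
  have hm := measurable_tuple μ X hX m
  rw [← integral_map (φ := fun ω => fun k : Fin m => X k ω)
    (f := fun f : Fin m → Fin n => Q (heightProcess G h0 (extSeq f) m)) hm.aemeasurable
    (measurable_of_finite _).aestronglyMeasurable]
  have : IsProbabilityMeasure (μ.map (fun ω => fun k : Fin m => X k ω)) :=
    Measure.isProbabilityMeasure_map hm.aemeasurable
  rw [integral_fintype (Integrable.of_finite)]
  apply Finset.sum_congr rfl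
  intro f _
  rw [smul_eq_mul]
  congr 1
  rw [Measure.real, Measure.map_apply hm (measurableSet_singleton f)]
  have e : (fun ω => fun k : Fin m => X k ω) ⁻¹' {f} = {ω | ∀ k < m, X k ω = extSeq f k} := by
    ext ω
    simp only [Set.mem_preimage, Set.mem_singleton_iff, Set.mem_ofPred_eq, funext_iff]
    constructor
    · intro h k hk
      simpa [extSeq, hk] using h ⟨k, hk⟩
    · intro h k
      simpa [extSeq] using h k k.2
  rw [e, hX.2 m (extSeq f)]
  simp

theorem height_le {V : Type*} [Fintype V] (G : SimpleGraph V) (X : ℕ → V) (m : ℕ) (x : V) :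
    heightProcess G (fun _ => 0) X m x ≤ m := by
  induction m generalizing x with
  | zero => exact le_rfl
  | succ m ih =>
    rw [heightProcess_succ]
    by_cases h : x = X m
    · subst h
      have := stepAt_self_le G (X m) (heightProcess G (fun _ => 0) X m) m (fun y _ => ih y)
      omega
    · rw [stepAt_ne _ _ h]
      exact (ih x).trans (Nat.le_succ m)

theorem exists_iid (n : ℕ) [NeZero n] : ∃ (μ : Measure (ℕ → Fin n)) (_ : IsProbabilityMeasure μ),
    IsUniformIID μ (fun k (ω : ℕ → Fin n) => ω k) := by
  let ν : Measure (Fin n) := (PMF.uniformOfFintype (Fin n)).toMeasure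
  refine ⟨Measure.infinitePi (fun _ : ℕ => ν), inferInstance, ?_, ?_⟩
  · intro k v
    have hm : Measurable (fun ω : ℕ → Fin n => ω k) := measurable_pi_apply k
    exact hm (measurableSet_singleton v)
  · intro m f
    have e : {ω : ℕ → Fin n | ∀ k < m, ω k = f k} =
        Set.pi (Finset.range m : Finset ℕ) (fun k => {f k}) := by
      ext ω
      simp
    rw [e, Measure.infinitePi_pi _ (fun _ _ => measurableSet_singleton _)]
    have : ∀ v, ν {v} = (n : ℝ≥0∞)⁻¹ := by
      intro v
      simp only [ν]
      rw [PMF.toMeasure_apply_singleton _ _ (measurableSet_singleton v)]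
      simp
    simp [this]

theorem tendsto_avg {n : ℕ} [NeZero n] (G : SimpleGraph (Fin n)) (γ : ℝ) (h : IsGrowthRate G γ) :
    Tendsto (fun m : ℕ => (n : ℝ) * (avg G)^[m] maxH (fun _ => 0) / m) atTop (𝓝 γ) := by
  obtain ⟨μ, hμ, hX⟩ := exists_iid n
  have h1 := (h.2 μ _ hX).1
  have h2 := tendsto_integral_of_dominated_convergence (μ := μ)
    (F := fun m ω => (n : ℝ) * maxH (heightProcess G (fun _ => 0) (fun k => ω k) m) / m)
    (f := fun _ => γ) (fun _ => (n : ℝ))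
    (fun m => ((((measurable_height μ _ hX G (fun _ => 0) m maxH).const_mul
      (n : ℝ)).div_const (m : ℝ)).aestronglyMeasurable))
    (integrable_const _) ?_ ?_
  · simp only [integral_const, probReal_univ, one_smul] at h2
    refine h2.congr (fun m => ?_)
    rw [integral_div, integral_const_mul, integral_height μ _ hX]
  · intro m
    refine Filter.Eventually.of_forall (fun ω => ?_)
    have ha : 0 ≤ maxH (heightProcess G (fun _ => 0) (fun k => ω k) m) :=
      le_trans (Nat.cast_nonneg _) (le_maxH _ 0)
    have hb : maxH (heightProcess G (fun _ => 0) (fun k => ω k) m) ≤ m :=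
      maxH_le _ _ (fun x => by exact_mod_cast height_le G _ m x)
    rw [Real.norm_of_nonneg (by positivity)]
    rcases Nat.eq_zero_or_pos m with rfl | hm
    · simp
    · rw [div_le_iff₀ (by exact_mod_cast hm)]
      gcongr
  · simpa [maxH] using h1

theorem gamma_upper {n : ℕ} (hn : 3 ≤ n) (γ : ℝ) (h : IsGrowthRate (starGraph n) γ) {l : ℝ}
    (hl : 1 < l) : γ ≤ (Real.log n + Real.log l + (l - 1)) / Real.log l := by
  have : NeZero n := ⟨by omega⟩
  have hnp : (0 : ℝ) < n := by exact_mod_cast (by omega : 0 < n)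
  have h1 := tendsto_avg _ γ h
  set C := (Real.log n + Real.log l + (l - 1)) / Real.log l
  set K := Real.log (expS l (fun _ : Fin n => 0)) / Real.log l
  have h2 : Tendsto (fun m : ℕ => n * K / m + C) atTop (𝓝 (0 + C)) :=
    (tendsto_const_div_atTop_nhds_zero_nat (n * K)).add_const C
  rw [zero_add] at h2
  refine le_of_tendsto_of_tendsto h1 h2 ?_
  filter_upwards [eventually_gt_atTop 0] with m hm
  have hmp : (0 : ℝ) < m := by exact_mod_cast hm
  have h3 := upper_iter hn hl m (fun _ => 0)
  rw [div_le_iff₀ hmp]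
  refine (mul_le_mul_of_nonneg_left h3 hnp.le).trans (le_of_eq ?_)
  change (n : ℝ) * (K + m * (C / n)) = _
  field_simp

theorem gamma_lower {n : ℕ} (hn : 3 ≤ n) (γ : ℝ) (h : IsGrowthRate (starGraph n) γ) (k w : ℕ)
    (hw : 1 ≤ w) :
    n * (k * (1 - Real.exp (-(n * (w.choose k * (n : ℝ)⁻¹ ^ k * (1 - (n : ℝ)⁻¹) ^ w)))) / (n + w))
      ≤ γ := by
  have : NeZero n := ⟨by omega⟩
  have hn1 : (1 : ℝ) ≤ n := by exact_mod_cast (by omega : 1 ≤ n)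
  have hnp : (0 : ℝ) < n := by linarith
  have ht1 : 0 ≤ 1 - (n : ℝ)⁻¹ := sub_nonneg.2 (inv_le_one_of_one_le₀ hn1)
  have h1 := tendsto_avg _ γ h
  set c := k * (1 - Real.exp (-(n * (w.choose k * (n : ℝ)⁻¹ ^ k * (1 - (n : ℝ)⁻¹) ^ w))))
  have hc : 0 ≤ c := by
    apply mul_nonneg (Nat.cast_nonneg _)
    rw [sub_nonneg, Real.exp_le_one_iff, neg_nonpos]
    positivity
  set a := c / (n + w) with ha
  have hnw : (0 : ℝ) < n + w := by positivity
  have h2 : Tendsto (fun m : ℕ => n * a - n * a * w / m) atTop (𝓝 (n * a - 0)) :=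
    (tendsto_const_div_atTop_nhds_zero_nat (n * a * w)).const_sub (n * a)
  rw [sub_zero] at h2
  refine le_of_tendsto_of_tendsto h2 h1 ?_
  filter_upwards [eventually_gt_atTop 0] with m hm
  have hmp : (0 : ℝ) < m := by exact_mod_cast hm
  have h3 := lower_iter a c w hw (by positivity) (window' k w)
    (by rw [ha]; field_simp; exact le_rfl) m (fun _ : Fin n => 0)
  rw [le_div_iff₀ hmp]
  refine le_trans (le_of_eq ?_) (mul_le_mul_of_nonneg_left h3 hnp.le)
  field_simp
  simp

/-! ### Asymptotics -/

theorem tL : Tendsto (fun n : ℕ => Real.log n) atTop atTop :=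
  Real.tendsto_log_atTop.comp tendsto_natCast_atTop_atTop

theorem tLL : Tendsto (fun n : ℕ => Real.log (Real.log n)) atTop atTop :=
  Real.tendsto_log_atTop.comp tL

theorem tlogdiv : Tendsto (fun x : ℝ => Real.log x / x) atTop (𝓝 0) :=
  Real.isLittleO_log_id_atTop.tendsto_div_nhds_zero

theorem upper_asymp (γ : ℕ → ℝ) (hγ : ∀ n, 3 ≤ n → IsGrowthRate (starGraph n) (γ n)) :
    ∀ᶠ n : ℕ in atTop, γ n * Real.log (Real.log n) / Real.log n ≤
      (1 + 2 / Real.log (Real.log n)) /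
        (1 - Real.log (Real.log (Real.log n)) / Real.log (Real.log n)) := by
  have hr : ∀ᶠ n : ℕ in atTop, Real.log (Real.log (Real.log n)) / Real.log (Real.log n) < 1 :=
    (tlogdiv.comp tLL).eventually_lt_const one_pos
  filter_upwards [eventually_ge_atTop 3, tL.eventually_ge_atTop 1, tLL.eventually_ge_atTop 1, hr]
    with n hn hL hl hr
  set L := Real.log (n : ℝ)
  set l := Real.log L with hldef
  have hLp : 0 < L := by linarith
  have hlp : 0 < l := by linarith
  have hlog : Real.log (L / l) = l - Real.log l := Real.log_div hLp.ne' hlp.ne'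
  have hpos : 0 < l - Real.log l := by
    rw [div_lt_one hlp] at hr
    linarith
  have h1 : 1 < L / l := by
    rw [← hlog] at hpos
    by_contra hcon
    exact absurd (Real.log_nonpos (by positivity) (not_lt.1 hcon)) (not_le.2 hpos)
  have h2 := gamma_upper hn (γ n) (hγ n hn) h1
  have h3 : Real.log (L / l) ≤ L / l := by
    have := Real.log_le_sub_one_of_pos (show 0 < L / l by positivity)
    linarith
  have h4 : γ n ≤ (L + 2 * (L / l)) / (l - Real.log l) := by
    refine h2.trans ?_
    rw [hlog]
    rw [hlog] at h3
    apply div_le_div_of_nonneg_right _ hpos.le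
    change L + (l - Real.log l) + (L / l - 1) ≤ _
    linarith
  have h5 : γ n * l / L ≤ (L + 2 * (L / l)) / (l - Real.log l) * l / L := by gcongr
  refine h5.trans (le_of_eq ?_)
  have : 1 - Real.log l / l = (l - Real.log l) / l := by field_simp
  rw [this]
  field_simp

set_option maxHeartbeats 2000000 in
theorem lower_asymp (γ : ℕ → ℝ) (hγ : ∀ n, 3 ≤ n → IsGrowthRate (starGraph n) (γ n))
    (ε : ℝ) (h0 : 0 < ε) (h1 : ε < 1 / 2) :
    ∀ᶠ n : ℕ in atTop, 1 - 5 * ε ≤ γ n * Real.log (Real.log n) / Real.log n := by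
  have hr : ∀ᶠ n : ℕ in atTop, Real.log (Real.log n) / Real.log n < ε :=
    (tlogdiv.comp tL).eventually_lt_const h0
  have hs : ∀ᶠ n : ℕ in atTop, Real.log n / n < ε / 2 :=
    (tlogdiv.comp tendsto_natCast_atTop_atTop).eventually_lt_const (by positivity)
  filter_upwards [eventually_ge_atTop 4, tL.eventually_ge_atTop 1, tLL.eventually_ge_atTop 1, hr, hs,
    tLL.eventually_ge_atTop (Real.log (2 / ε) / ε),
    tL.eventually_ge_atTop (Real.log (1 / ε) * 4 / ε ^ 2),
    (tendsto_natCast_atTop_atTop (R := ℝ)).eventually_ge_atTop (1 / ε)]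
    with n hn hL hl hr hs hD hE hN
  have hn4 : (4 : ℝ) ≤ n := by exact_mod_cast hn
  have hnp : (0 : ℝ) < n := by linarith
  have hexpL : Real.exp (Real.log (n : ℝ)) = n := Real.exp_log hnp
  set L := Real.log (n : ℝ)
  have hLp : 0 < L := by linarith
  have hexpl : Real.exp (Real.log L) = L := Real.exp_log hLp
  set l := Real.log L with hldef
  have hlp : 0 < l := by linarith
  rw [div_lt_iff₀ hLp] at hr
  rw [div_lt_iff₀ hnp] at hs
  rw [div_le_iff₀ h0] at hD
  rw [div_le_iff₀ (by positivity)] at hE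
  rw [div_le_iff₀ h0] at hN
  set k := ⌊(1 - ε) * L / l⌋₊ with hk
  set w := ⌈ε * n⌉₊ with hw
  have hk1 : (k : ℝ) ≤ (1 - ε) * L / l :=
    Nat.floor_le (div_nonneg (mul_nonneg (by linarith) hLp.le) hlp.le)
  have hk2 : (1 - ε) * L / l - 1 < k := Nat.sub_one_lt_floor _
  have hw1 : ε * n ≤ w := Nat.le_ceil _
  have hw2 : (w : ℝ) < ε * n + 1 := Nat.ceil_lt_add_one (by positivity)
  have hwpos : 1 ≤ w := by
    rw [hw, Nat.one_le_ceil_iff]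
    positivity
  have hkl : k * l ≤ (1 - ε) * L := (le_div_iff₀ hlp).1 hk1
  have hkL : (k : ℝ) ≤ L := by nlinarith
  have hkw : k ≤ w := by
    have : (k : ℝ) ≤ w := by nlinarith
    exact_mod_cast this
  have hγl := gamma_lower (by omega) (γ n) (hγ n (by omega)) k w hwpos
  -- bound on the exponent
  have hch : (ε / (2 * L)) ^ k ≤ w.choose k * (n : ℝ)⁻¹ ^ k := by
    have c1 := Nat.pow_le_choose (α := ℝ) k w
    have c2 : (ε * n / 2) ^ k / L ^ k ≤ ((w + 1 - k : ℕ) ^ k : ℝ) / (k.factorial : ℝ) := by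
      have f1 : (k.factorial : ℝ) ≤ L ^ k := by
        have : (k.factorial : ℝ) ≤ (k : ℝ) ^ k := by exact_mod_cast Nat.factorial_le_pow k
        exact this.trans (by gcongr)
      have f2 : ε * n / 2 ≤ ((w + 1 - k : ℕ) : ℝ) := by
        rw [Nat.cast_sub (by omega)]
        push_cast
        nlinarith
      have f3 : 0 < (k.factorial : ℝ) := by exact_mod_cast Nat.factorial_pos k
      gcongr
    calc (ε / (2 * L)) ^ k = (ε * n / 2) ^ k / L ^ k * (n : ℝ)⁻¹ ^ k := by
          rw [← div_pow, ← mul_pow]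
          congr 1
          field_simp
      _ ≤ _ := by
          gcongr
          exact c2.trans c1
  have hexp : Real.exp (-((1 - ε ^ 2) * L)) ≤ (ε / (2 * L)) ^ k := by
    have e1 : ε / (2 * L) = Real.exp (-(l + Real.log (2 / ε))) := by
      rw [Real.exp_neg, Real.exp_add, hexpl, Real.exp_log (by positivity)]
      field_simp
    rw [e1, ← Real.exp_nat_mul]
    apply Real.exp_le_exp.2
    have : k * (l + Real.log (2 / ε)) ≤ k * (l * (1 + ε)) := by
      apply mul_le_mul_of_nonneg_left _ (Nat.cast_nonneg k)
      linarith
    nlinarith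
  have hber : 1 / 4 ≤ (1 - (n : ℝ)⁻¹) ^ w := by
    have b1 := one_add_mul_le_pow (a := -(n : ℝ)⁻¹)
      (by have : (n : ℝ)⁻¹ ≤ 1 := inv_le_one_of_one_le₀ (by linarith)
          linarith) w
    have b2 : (w : ℝ) * (n : ℝ)⁻¹ ≤ 3 / 4 := by
      rw [← div_eq_mul_inv, div_le_iff₀ hnp]
      nlinarith
    rw [← sub_eq_add_neg] at b1
    linarith
  have hq : Real.log (1 / ε) ≤ n * (w.choose k * (n : ℝ)⁻¹ ^ k * (1 - (n : ℝ)⁻¹) ^ w) := by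
    calc Real.log (1 / ε) ≤ (ε ^ 2 * L) * (1 / 4) := by linarith
      _ ≤ Real.exp (ε ^ 2 * L) * (1 / 4) := by
          have := Real.add_one_le_exp (ε ^ 2 * L)
          linarith
      _ = n * (Real.exp (-((1 - ε ^ 2) * L)) * (1 / 4)) := by
          rw [← hexpL, ← mul_assoc, ← Real.exp_add]
          congr 2
          ring
      _ ≤ _ := by
          have := hexp.trans hch
          gcongr
  have hp : 1 - ε ≤ 1 - Real.exp (-(n * (w.choose k * (n : ℝ)⁻¹ ^ k * (1 - (n : ℝ)⁻¹) ^ w))) := by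
    have : Real.exp (-(n * (w.choose k * (n : ℝ)⁻¹ ^ k * (1 - (n : ℝ)⁻¹) ^ w))) ≤ ε := by
      calc _ ≤ Real.exp (-Real.log (1 / ε)) := Real.exp_le_exp.2 (neg_le_neg hq)
        _ = ε := by rw [Real.exp_neg, Real.exp_log (by positivity)]; simp
    linarith
  set p := 1 - Real.exp (-(n * (w.choose k * (n : ℝ)⁻¹ ^ k * (1 - (n : ℝ)⁻¹) ^ w)))
  have hfin : (1 - 5 * ε) * (L / l) ≤ γ n := by
    refine le_trans ?_ hγl
    have hk3 : (1 - 2 * ε) * (L / l) ≤ k := by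
      have : 1 ≤ ε * (L / l) := by
        rw [← mul_div_assoc, le_div_iff₀ hlp]
        linarith
      have e : (1 - ε) * L / l = (1 - ε) * (L / l) := by ring
      rw [e] at hk2
      linarith
    have hx : 0 < L / l := by positivity
    have hwn : (w : ℝ) ≤ 2 * ε * n := by linarith
    have hkp : (1 - 3 * ε) * (L / l) ≤ k * p := by
      have s1 : (k : ℝ) * (1 - ε) ≤ k * p := mul_le_mul_of_nonneg_left hp (Nat.cast_nonneg k)
      have s2 := mul_le_mul_of_nonneg_right hk3 (show 0 ≤ 1 - ε by linarith)
      nlinarith [mul_pos (mul_pos h0 h0) hx]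
    have hkp0 : 0 ≤ k * p := mul_nonneg (Nat.cast_nonneg k) (by linarith)
    rw [← mul_div_assoc (n : ℝ), le_div_iff₀ (by positivity)]
    have s3 : (1 - 5 * ε) * (L / l) * (n + w) ≤ n * ((1 - 3 * ε) * (L / l)) := by
      rw [show (1 - 5 * ε) * (L / l) * (n + w) = (L / l) * ((1 - 5 * ε) * (n + w)) by ring,
        show n * ((1 - 3 * ε) * (L / l)) = (L / l) * ((1 - 3 * ε) * n) by ring]
      apply mul_le_mul_of_nonneg_left _ hx.le
      by_cases h5 : 1 - 5 * ε ≤ 0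
      · nlinarith [mul_nonneg (neg_nonneg.2 h5) (Nat.cast_nonneg (α := ℝ) w), mul_pos h0 hnp]
      · have s4 := mul_le_mul_of_nonneg_left hwn (not_le.1 h5).le
        nlinarith [mul_pos h0 hnp, mul_pos (mul_pos h0 h0) hnp]
    exact s3.trans (mul_le_mul_of_nonneg_left hkp hnp.le)
  rw [le_div_iff₀ hLp]
  rw [← mul_div_assoc, div_le_iff₀ hlp] at hfin
  exact hfin

end Aux

theorem stmt9 (γ : ℕ → ℝ) (hγ : ∀ n, 3 ≤ n → IsGrowthRate (starGraph n) (γ n)) :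
    Tendsto (fun n : ℕ => γ n * Real.log (Real.log n) / Real.log n) atTop (𝓝 1) ∧
    Tendsto γ atTop atTop := by
  have main : Tendsto (fun n : ℕ => γ n * Real.log (Real.log n) / Real.log n) atTop (𝓝 1) := by
    have hU : Tendsto (fun n : ℕ => (1 + 2 / Real.log (Real.log n)) /
        (1 - Real.log (Real.log (Real.log n)) / Real.log (Real.log n))) atTop
        (𝓝 ((1 + 0) / (1 - 0))) :=
      ((tLL.const_div_atTop 2).const_add 1).div ((tlogdiv.comp tLL).const_sub 1) (by norm_num)
    rw [show ((1 : ℝ) + 0) / (1 - 0) = 1 by norm_num] at hU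
    rw [tendsto_order]
    constructor
    · intro a ha
      have hm : 0 < min ((1 - a) / 10) (1 / 4) := lt_min (by linarith) (by norm_num)
      have hm1 := min_le_left ((1 - a) / 10) (1 / 4)
      have hm2 := min_le_right ((1 - a) / 10) (1 / 4)
      filter_upwards [lower_asymp γ hγ _ hm (by linarith)] with n hn
      linarith
    · intro a ha
      filter_upwards [upper_asymp γ hγ, hU.eventually_lt_const ha] with n h1 h2
      linarith
  refine ⟨main, ?_⟩
  have hdiv : Tendsto (fun n : ℕ => Real.log n / Real.log (Real.log n)) atTop atTop := by
    have h1 : Tendsto (fun n : ℕ => Real.log (Real.log n) / Real.log n) atTop (𝓝[>] 0) := by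
      rw [tendsto_nhdsWithin_iff]
      refine ⟨tlogdiv.comp tL, ?_⟩
      filter_upwards [tL.eventually_gt_atTop 0, tLL.eventually_gt_atTop 0] with n h1 h2
      exact div_pos h2 h1
    refine h1.inv_tendsto_nhdsGT_zero.congr (fun n => ?_)
    simp
  refine (main.pos_mul_atTop one_pos hdiv).congr' ?_
  filter_upwards [tL.eventually_gt_atTop 0, tLL.eventually_gt_atTop 0] with n h1 h2
  field_simp
end

section
/- There exist finite connected simple graphs G and H which are not isomorphic but whose growth rates coincide: γ(G) = γ(H). (Proposition 1; e.g. a graph obtained by triplicating the butterfly graph has growth rate 11 = γ(K_11).) -/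
open MeasureTheory Filter Topology
open scoped ENNReal Classical

namespace BD

/-- Run of a deterministic automaton driven by `x`. -/
def run {σ V : Type*} (step : σ → V → σ) (s0 : σ) (x : ℕ → V) : ℕ → σ
  | 0 => s0
  | n + 1 => step (run step s0 x n) (x n)

lemma run_congr {σ V : Type*} (step : σ → V → σ) (s0 : σ) (x y : ℕ → V) (n : ℕ)
    (h : ∀ k < n, x k = y k) : run step s0 x n = run step s0 y n := by
  induction n with
  | zero => rfl
  | succ n ih =>
    simp only [run]
    rw [ih (fun k hk => h k (by omega)), h n (by omega)]

/-- Extension of a finite word to an infinite one. -/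
def ext {V : Type*} (c : V) {n : ℕ} (w : Fin n → V) (k : ℕ) : V :=
  if h : k < n then w ⟨k, h⟩ else c

section Prob

variable {V : Type*} [Fintype V] {Ω : Type*} [MeasurableSpace Ω]

lemma meas_word [MeasurableSpace V] (hV : ∀ s : Set V, MeasurableSet s)
    (μ : Measure Ω) (X : ℕ → Ω → V) (hX : IsUniformIID μ X) (n : ℕ) :
    Measurable (fun ω => (fun k : Fin n => X k ω)) := by
  refine measurable_pi_lambda _ (fun k => ?_)
  have : MeasurableSingletonClass V := ⟨fun a => hV _⟩
  exact measurable_to_countable' (fun v => hX.1 k v)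

lemma integrable_cyl (μ : Measure Ω) [IsProbabilityMeasure μ] (X : ℕ → Ω → V)
    (hX : IsUniformIID μ X) (c : V) (n : ℕ) (F : (ℕ → V) → ℝ)
    (hF : ∀ x y : ℕ → V, (∀ k < n, x k = y k) → F x = F y) :
    Integrable (fun ω => F (fun k => X k ω)) μ ∧
    ∫ ω, F (fun k => X k ω) ∂μ
      = ((Fintype.card V : ℝ)⁻¹) ^ n * ∑ w : Fin n → V, F (ext c w) := by
  letI : MeasurableSpace V := ⊤
  have : MeasurableSingletonClass V := ⟨fun a => trivial⟩
  have hm := meas_word (fun s => MeasurableSpace.measurableSet_top) μ X hX n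
  have hFe : (fun ω => F (fun k => X k ω)) =
      (fun w : Fin n → V => F (ext c w)) ∘ (fun ω => (fun k : Fin n => X k ω)) := by
    funext ω
    apply hF
    intro k hk
    simp [ext, hk]
  have : IsProbabilityMeasure (μ.map (fun ω => (fun k : Fin n => X k ω))) :=
    Measure.isProbabilityMeasure_map hm.aemeasurable
  have hIntg : Integrable (fun w : Fin n → V => F (ext c w))
      (μ.map (fun ω => (fun k : Fin n => X k ω))) := Integrable.of_finite
  refine ⟨?_, ?_⟩
  · rw [hFe]
    exact hIntg.comp_measurable hm
  · rw [hFe]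
    have := integral_map (μ := μ) hm.aemeasurable hIntg.aestronglyMeasurable
    simp only [Function.comp_def]
    rw [← this, integral_fintype hIntg, Finset.mul_sum]
    refine Finset.sum_congr rfl (fun w _ => ?_)
    rw [smul_eq_mul]
    congr 1
    rw [measureReal_def, Measure.map_apply hm (measurableSet_singleton _)]
    have : (fun ω => (fun k : Fin n => X k ω)) ⁻¹' {w} = {ω | ∀ k < n, X k ω = ext c w k} := by
      ext ω
      simp only [Set.mem_preimage, Set.mem_singleton_iff, Set.mem_ofPred_eq, funext_iff]
      constructor
      · intro h k hk
        simpa [ext, hk] using h ⟨k, hk⟩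
      · intro h k
        simpa [ext] using h k k.2
    rw [this, hX.2]
    simp

lemma one_step (μ : Measure Ω) [IsProbabilityMeasure μ] (X : ℕ → Ω → V)
    (hX : IsUniformIID μ X) (c : V) (n : ℕ) (F : (ℕ → V) → V → ℝ)
    (hF : ∀ x y : ℕ → V, (∀ k < n, x k = y k) → F x = F y) :
    ∫ ω, F (fun k => X k ω) (X n ω) ∂μ
      = ∫ ω, (Fintype.card V : ℝ)⁻¹ * ∑ v, F (fun k => X k ω) v ∂μ := by
  have h1 := (integrable_cyl μ X hX c (n+1) (fun x => F x (x n)) (by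
    intro x y h
    rw [hF x y (fun k hk => h k (by omega)), h n (by omega)])).2
  have h2 := (integrable_cyl μ X hX c n (fun x => (Fintype.card V : ℝ)⁻¹ * ∑ v, F x v) (by
    intro x y h
    rw [hF x y h])).2
  simp only at h1 h2
  rw [h1, h2, pow_succ, mul_assoc, ← Finset.mul_sum]
  congr 2
  rw [← (Fin.snocEquiv (fun _ : Fin (n+1) => V)).sum_comp, Fintype.sum_prod_type,
    Finset.sum_comm]
  refine Finset.sum_congr rfl (fun w _ => Finset.sum_congr rfl (fun v _ => ?_))
  have e1 : ext c ((Fin.snocEquiv (fun _ : Fin (n+1) => V)) (v, w)) n = v := by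
    simp [ext, Fin.snocEquiv, Fin.snoc]
  rw [e1, hF _ (ext c w)]
  intro k hk
  have : k < n + 1 := by omega
  simp [ext, Fin.snocEquiv, Fin.snoc, hk, this]

lemma second_moment {σ : Type*} (μ : Measure Ω) [IsProbabilityMeasure μ] (X : ℕ → Ω → V)
    (hX : IsUniformIID μ X) (c : V) (step : σ → V → σ) (s0 : σ) (W : σ → ℝ) (g C : ℝ)
    (h0 : ∀ s, ∑ v, (W (step s v) - W s - g) = 0)
    (hC : ∀ s v, |W (step s v) - W s - g| ≤ C) (n : ℕ) :
    Integrable (fun ω => (W (run step s0 (fun k => X k ω) n) - W s0 - g * n) ^ 2) μ ∧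
    ∫ ω, (W (run step s0 (fun k => X k ω) n) - W s0 - g * n) ^ 2 ∂μ ≤ C ^ 2 * n := by
  have hI : ∀ n : ℕ, Integrable
      (fun ω => (W (run step s0 (fun k => X k ω) n) - W s0 - g * n) ^ 2) μ := fun n =>
    (integrable_cyl μ X hX c n (fun x => (W (run step s0 x n) - W s0 - g * n) ^ 2) (by
      intro x y h
      rw [run_congr step s0 x y n h])).1
  refine ⟨hI n, ?_⟩
  induction n with
  | zero => simp [run]
  | succ n ih =>
    have key := one_step μ X hX c n
      (fun x v => (W (step (run step s0 x n) v) - W s0 - g * (n+1 : ℕ)) ^ 2) (by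
        intro x y h
        rw [run_congr step s0 x y n h])
    have hcard : (0:ℝ) < Fintype.card V := by
      have : Nonempty V := ⟨c⟩
      exact_mod_cast Fintype.card_pos
    have hle : ∀ s : σ, (Fintype.card V : ℝ)⁻¹ *
        ∑ v, (W (step s v) - W s0 - g * (n+1 : ℕ)) ^ 2 ≤
          (W s - W s0 - g * n) ^ 2 + C ^ 2 := by
      intro s
      have e : ∀ v, (W (step s v) - W s0 - g * (n+1 : ℕ)) ^ 2 =
          (W s - W s0 - g * n) ^ 2 + 2 * (W s - W s0 - g * n) * (W (step s v) - W s - g)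
            + (W (step s v) - W s - g) ^ 2 := by
        intro v
        push_cast
        ring
      simp only [e, Finset.sum_add_distrib, ← Finset.mul_sum, h0]
      have : ∑ v, (W (step s v) - W s - g) ^ 2 ≤ ∑ v : V, C ^ 2 :=
        Finset.sum_le_sum (fun v _ => sq_le_sq' (by linarith [abs_le.1 (hC s v)])
          (abs_le.1 (hC s v)).2)
      simp only [Finset.sum_const, Finset.card_univ, nsmul_eq_mul] at this ⊢
      rw [inv_mul_le_iff₀ hcard]
      nlinarith
    calc ∫ ω, (W (run step s0 (fun k => X k ω) (n+1)) - W s0 - g * (n+1 : ℕ)) ^ 2 ∂μ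
        = ∫ ω, (Fintype.card V : ℝ)⁻¹ * ∑ v,
          (W (step (run step s0 (fun k => X k ω) n) v) - W s0 - g * (n+1 : ℕ)) ^ 2 ∂μ := key
      _ ≤ ∫ ω, ((W (run step s0 (fun k => X k ω) n) - W s0 - g * n) ^ 2 + C ^ 2) ∂μ := by
          refine integral_mono ?_ ((hI n).add (integrable_const _)) (fun ω => hle _)
          exact (integrable_cyl μ X hX c n (fun x => (Fintype.card V : ℝ)⁻¹ * ∑ v,
            (W (step (run step s0 x n) v) - W s0 - g * (n+1 : ℕ)) ^ 2) (by
              intro x y h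
              rw [run_congr step s0 x y n h])).1
      _ = ∫ ω, (W (run step s0 (fun k => X k ω) n) - W s0 - g * n) ^ 2 ∂μ + C ^ 2 := by
          rw [integral_add (hI n) (integrable_const _)]
          simp
      _ ≤ C ^ 2 * (n+1 : ℕ) := by
          push_cast
          linarith

lemma tendsto_of_sq (T : ℕ → ℝ) (C : ℝ) (hC : ∀ n, |T (n+1) - T n| ≤ C)
    (h : Tendsto (fun m : ℕ => T (m^2) / (m:ℝ)^2) atTop (𝓝 0)) :
    Tendsto (fun n : ℕ => T n / n) atTop (𝓝 0) := by
  have hC0 : 0 ≤ C := (abs_nonneg _).trans (hC 0)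
  have hadd : ∀ m k : ℕ, |T (m + k) - T m| ≤ C * k := by
    intro m k
    induction k with
    | zero => simp
    | succ k ih =>
      have h1 := hC (m + k)
      have : T (m + (k+1)) - T m = (T (m + k + 1) - T (m+k)) + (T (m+k) - T m) := by
        rw [← add_assoc]; ring
      rw [this]
      refine (abs_add_le _ _).trans ?_
      push_cast
      linarith
  have hsq : Tendsto Nat.sqrt atTop atTop := by
    refine tendsto_atTop.2 (fun b => ?_)
    filter_upwards [eventually_ge_atTop (b*b)] with n hn
    exact Nat.le_sqrt.2 hn
  have hu : Tendsto (fun m : ℕ => |T (m^2) / (m:ℝ)^2| + 2 * C / m) atTop (𝓝 0) := by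
    have := h.abs.add (tendsto_const_div_atTop_nhds_zero_nat (2 * C))
    simpa using this
  refine squeeze_zero_norm' ?_ (hu.comp hsq)
  filter_upwards [eventually_ge_atTop 1] with n hn
  obtain ⟨k, hk⟩ := Nat.exists_eq_add_of_le (Nat.sqrt_le' n)
  have hk2 : k ≤ 2 * Nat.sqrt n := by
    have := Nat.sqrt_le_add n
    rw [pow_two] at hk
    omega
  have hm : 1 ≤ Nat.sqrt n := Nat.le_sqrt.2 (by omega)
  simp only [Function.comp_apply, Real.norm_eq_abs]
  generalize Nat.sqrt n = m at *
  have hmR : (1:ℝ) ≤ m := by exact_mod_cast hm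
  have hnm : (m:ℝ)^2 ≤ n := by rw [hk]; push_cast; linarith [(Nat.cast_nonneg k : (0:ℝ) ≤ k)]
  have hb : |T n| ≤ |T (m^2)| + 2 * C * m := by
    have h1 := hadd (m^2) k
    rw [← hk] at h1
    have h2 : (k:ℝ) ≤ 2 * m := by exact_mod_cast hk2
    have h3 := abs_sub_abs_le_abs_sub (T n) (T (m^2))
    nlinarith
  have hm2 : (0:ℝ) < (m:ℝ)^2 := by positivity
  calc |T n / n| = |T n| / n := by rw [abs_div, Nat.abs_cast]
    _ ≤ (|T (m^2)| + 2 * C * m) / (m:ℝ)^2 := by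
        apply div_le_div₀ _ hb hm2 hnm
        positivity
    _ = |T (m^2) / (m:ℝ)^2| + 2 * C / m := by
        rw [abs_div, abs_of_pos hm2]
        field_simp

lemma slln {σ : Type*} (μ : Measure Ω) [IsProbabilityMeasure μ] (X : ℕ → Ω → V)
    (hX : IsUniformIID μ X) (c : V) (step : σ → V → σ) (s0 : σ) (W : σ → ℝ) (g C : ℝ)
    (h0 : ∀ s, ∑ v, (W (step s v) - W s - g) = 0)
    (hC : ∀ s v, |W (step s v) - W s - g| ≤ C) :
    ∀ᵐ ω ∂μ, Tendsto (fun n : ℕ => W (run step s0 (fun k => X k ω) n) / n) atTop (𝓝 g) := by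
  set T : Ω → ℕ → ℝ := fun ω n => W (run step s0 (fun k => X k ω) n) - W s0 - g * n with hT
  have hmom := second_moment μ X hX c step s0 W g C h0 hC
  have hIntg : ∀ m : ℕ, Integrable (fun ω => (T ω (m^2) / (m:ℝ)^2)^2) μ := by
    intro m
    have := ((hmom (m^2)).1).div_const (((m:ℝ)^2)^2)
    refine this.congr (Eventually.of_forall (fun ω => ?_))
    simp only [hT, div_pow]
  have hbd : ∀ m : ℕ, ∫ ω, (T ω (m^2) / (m:ℝ)^2)^2 ∂μ ≤ C^2 * (1 / (m:ℝ)^2) := by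
    intro m
    rcases Nat.eq_zero_or_pos m with rfl | hm
    · simp
    simp only [div_pow]
    rw [integral_div, div_le_iff₀ (by positivity)]
    refine (hmom (m^2)).2.trans (le_of_eq ?_)
    push_cast
    have : (m:ℝ) ≠ 0 := by positivity
    field_simp
  have hsum : Summable (fun m : ℕ => C^2 * (1 / (m:ℝ)^2)) :=
    (Real.summable_one_div_nat_pow.2 (by norm_num)).mul_left _
  have hl : ∀ᵐ ω ∂μ, ∑' m : ℕ, ENNReal.ofReal ((T ω (m^2) / (m:ℝ)^2)^2) < ∞ := by
    refine ae_lt_top' ?_ ?_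
    · exact AEMeasurable.tsum (fun m => (hIntg m).aemeasurable.ennreal_ofReal)
    · rw [lintegral_tsum (fun m => (hIntg m).aemeasurable.ennreal_ofReal)]
      refine ne_top_of_le_ne_top hsum.tsum_ofReal_ne_top (ENNReal.tsum_le_tsum (fun m => ?_))
      rw [← ofReal_integral_eq_lintegral_ofReal (hIntg m)
        (Eventually.of_forall (fun ω => sq_nonneg _))]
      exact ENNReal.ofReal_le_ofReal (hbd m)
  filter_upwards [hl] with ω hω
  have ht := ENNReal.tendsto_atTop_zero_of_tsum_ne_top hω.ne
  have ht2 : Tendsto (fun m : ℕ => (T ω (m^2) / (m:ℝ)^2)^2) atTop (𝓝 0) := by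
    have := (ENNReal.tendsto_toReal ENNReal.zero_ne_top).comp ht
    refine this.congr (fun m => ?_)
    simp only [Function.comp_apply]
    exact ENNReal.toReal_ofReal (sq_nonneg _)
  have ht3 : Tendsto (fun m : ℕ => T ω (m^2) / (m:ℝ)^2) atTop (𝓝 0) := by
    have := (Real.continuous_sqrt.tendsto 0).comp ht2
    simp only [Function.comp_def, Real.sqrt_sq_eq_abs, Real.sqrt_zero] at this
    exact (tendsto_zero_iff_abs_tendsto_zero _).2 this
  have ht4 := tendsto_of_sq (T ω) C (by
    intro n
    have := hC (run step s0 (fun k => X k ω) n) (X n ω)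
    refine le_of_eq_of_le ?_ this
    simp only [hT, run]
    push_cast
    congr 1
    ring) ht3
  have ht5 := (ht4.add (tendsto_const_div_atTop_nhds_zero_nat (W s0))).add_const g
  simp only [zero_add] at ht5
  refine ht5.congr' ?_
  filter_upwards [eventually_ge_atTop 1] with n hn
  have : (n:ℝ) ≠ 0 := by positivity
  simp only [hT]
  field_simp
  ring

end Prob

section Graph

variable {V : Type*} [Fintype V]

/-- Maximal height. -/
noncomputable def maxH (h : V → ℕ) : ℕ := Finset.univ.sup h

lemma le_maxH (h : V → ℕ) (x : V) : h x ≤ maxH h := Finset.le_sup (Finset.mem_univ x)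

lemma iSup_eq_maxH [Nonempty V] (h : V → ℕ) : (⨆ x : V, (h x : ℝ)) = (maxH h : ℝ) := by
  apply le_antisymm
  · exact ciSup_le (fun x => by exact_mod_cast le_maxH h x)
  · obtain ⟨x, _, hx⟩ := Finset.exists_mem_eq_sup Finset.univ Finset.univ_nonempty h
    rw [maxH, hx]
    exact le_ciSup (f := fun x : V => (h x : ℝ)) (Set.finite_range _).bddAbove x

lemma height_succ_self (G : SimpleGraph V) (X : ℕ → V) (n : ℕ) :
    heightProcess G (fun _ => 0) X (n+1) (X n) = 1 + Finset.univ.sup (fun y =>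
          if y = X n ∨ G.Adj (X n) y then heightProcess G (fun _ => 0) X n y else 0) := by
  simp [heightProcess]

lemma height_succ_ne (G : SimpleGraph V) (X : ℕ → V) (n : ℕ) (x : V) (h : x ≠ X n) :
    heightProcess G (fun _ => 0) X (n+1) x = heightProcess G (fun _ => 0) X n x := by
  simp [heightProcess, h]

lemma height_le_of_adj (G : SimpleGraph V) (X : ℕ → V) (n : ℕ) (y : V)
    (h : y = X n ∨ G.Adj (X n) y) :
    heightProcess G (fun _ => 0) X n y + 1 ≤ heightProcess G (fun _ => 0) X (n+1) (X n) := by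
  rw [height_succ_self, add_comm]
  have := Finset.le_sup (f := fun y =>
    if y = X n ∨ G.Adj (X n) y then heightProcess G (fun _ => 0) X n y else 0) (Finset.mem_univ y)
  simp only [h, if_true] at this
  omega

lemma height_mono (G : SimpleGraph V) (X : ℕ → V) (x : V) :
    Monotone (fun n => heightProcess G (fun _ => 0) X n x) := by
  refine monotone_nat_of_le_succ (fun n => ?_)
  by_cases h : x = X n
  · subst h
    have := height_le_of_adj G X n (X n) (Or.inl rfl)
    omega
  · exact (height_succ_ne G X n x h).ge

lemma maxH_mono (G : SimpleGraph V) (X : ℕ → V) :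
    Monotone (fun n => maxH (heightProcess G (fun _ => 0) X n)) := fun a b hab =>
  Finset.sup_mono_fun (fun x _ => height_mono G X x hab)

/-- If the universal vertex and then `x` are chosen, `x` is above the old maximum. -/
lemma height_ge (G : SimpleGraph V) (X : ℕ → V) (c : V) (hc : ∀ y, y ≠ c → G.Adj c y)
    (x : V) (a b n t s : ℕ) (hat : a ≤ t) (htb : t < b) (hbs : b ≤ s) (hsn : s < n)
    (ht : X t = c) (hs : X s = x) :
    maxH (heightProcess G (fun _ => 0) X a) ≤ heightProcess G (fun _ => 0) X n x := by
  have h1 : maxH (heightProcess G (fun _ => 0) X t) ≤ heightProcess G (fun _ => 0) X (t+1) c := by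
    refine Finset.sup_le (fun y _ => ?_)
    have := height_le_of_adj G X t y (by
      rw [ht]
      by_cases h : y = c
      · exact Or.inl h
      · exact Or.inr (hc y h))
    rw [ht] at this
    omega
  have h2 := height_le_of_adj G X s c (by
      rw [hs]
      by_cases h : c = x
      · exact Or.inl h
      · exact Or.inr (hc x (Ne.symm h)).symm)
  rw [hs] at h2
  have h3 := height_mono G X c (show t + 1 ≤ s by omega)
  have h4 := height_mono G X x (show s + 1 ≤ n by omega)
  have h5 := maxH_mono G X hat
  simp only at h3 h4 h5
  omega

/-- Counting automaton. -/
noncomputable def cstep (v : V) (s : ℕ) (u : V) : ℕ := if u = v then s + 1 else s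

lemma count_ae {Ω : Type*} [MeasurableSpace Ω] (μ : Measure Ω) [IsProbabilityMeasure μ]
    (X : ℕ → Ω → V) (hX : IsUniformIID μ X) (v : V) :
    ∀ᵐ ω ∂μ, Tendsto (fun n : ℕ => ((run (cstep v) 0 (fun k => X k ω) n : ℕ) : ℝ) / n) atTop
      (𝓝 (Fintype.card V : ℝ)⁻¹) := by
  have hcard : (0:ℝ) < Fintype.card V := by
    have : Nonempty V := ⟨v⟩
    exact_mod_cast Fintype.card_pos
  have hstep : ∀ (s : ℕ) (u : V), ((cstep v s u : ℕ) : ℝ) - s = if u = v then 1 else 0 := by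
    intro s u
    unfold cstep
    split_ifs <;> simp
  refine slln μ X hX v (cstep v) 0 (fun s : ℕ => (s:ℝ)) _ (1 + (Fintype.card V : ℝ)⁻¹) ?_ ?_
  · intro s
    simp only [hstep, Finset.sum_sub_distrib]
    simp [hcard.ne']
  · intro s u
    simp only [hstep]
    have : 0 < (Fintype.card V : ℝ)⁻¹ := by positivity
    rw [abs_le]
    split_ifs <;> constructor <;> linarith

lemma exists_of_count (v : V) (x : ℕ → V) (a b : ℕ)
    (h : run (cstep v) 0 x a < run (cstep v) 0 x b) : ∃ t, a ≤ t ∧ t < b ∧ x t = v := by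
  by_contra hcon
  push Not at hcon
  have key : ∀ k, k ≤ b → run (cstep v) 0 x k ≤ run (cstep v) 0 x a := by
    intro k
    induction k with
    | zero => intro _; simp [run]
    | succ k ih =>
      intro hk
      rcases Nat.lt_or_ge k a with hka | hka
      · have mono : Monotone (run (cstep v) 0 x) := by
          refine monotone_nat_of_le_succ (fun n => ?_)
          simp only [run, cstep]
          split_ifs <;> omega
        exact mono hka
      · have : x k ≠ v := hcon k hka (by omega)
        simp only [run, cstep, this, if_false]
        exact ih (by omega)
  have := key b le_rfl
  omega

lemma floor_tendsto (u : ℕ → ℝ) (g a : ℝ) (ha : 0 < a)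
    (hu : Tendsto (fun n : ℕ => u n / n) atTop (𝓝 g)) :
    Tendsto (fun n : ℕ => u ⌊a * n⌋₊ / n) atTop (𝓝 (g * a)) := by
  have hf : Tendsto (fun n : ℕ => ⌊a * (n:ℝ)⌋₊) atTop atTop :=
    tendsto_nat_floor_atTop.comp (tendsto_natCast_atTop_atTop.const_mul_atTop ha)
  have h1 := hu.comp hf
  have h2 : Tendsto (fun n : ℕ => (⌊a * (n:ℝ)⌋₊ : ℝ) / n) atTop (𝓝 a) :=
    (tendsto_nat_floor_mul_div_atTop ha.le).comp tendsto_natCast_atTop_atTop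
  refine (h1.mul h2).congr' ?_
  filter_upwards [hf.eventually_ge_atTop 1] with n hn
  have : (⌊a * (n:ℝ)⌋₊ : ℝ) ≠ 0 := by positivity
  simp only [Function.comp_apply]
  rw [div_mul_div_cancel₀ this]

lemma window (v : V) (x : ℕ → V) (p : ℝ) (hp : 0 < p)
    (h : Tendsto (fun n : ℕ => ((run (cstep v) 0 x n : ℕ) : ℝ) / n) atTop (𝓝 p)) (a b : ℝ)
    (ha : 0 < a) (hab : a < b) :
    ∀ᶠ n : ℕ in atTop, ∃ t, ⌊a * (n:ℝ)⌋₊ ≤ t ∧ t < ⌊b * (n:ℝ)⌋₊ ∧ x t = v := by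
  have h1 := floor_tendsto (fun n => ((run (cstep v) 0 x n : ℕ) : ℝ)) p a ha h
  have h2 := floor_tendsto (fun n => ((run (cstep v) 0 x n : ℕ) : ℝ)) p b (ha.trans hab) h
  filter_upwards [h1.eventually_lt h2 (mul_lt_mul_of_pos_left hab hp), eventually_ge_atTop 1]
    with n hn hn1
  apply exists_of_count
  have : (0:ℝ) < n := by positivity
  have := (div_lt_div_iff_of_pos_right this).1 hn
  exact_mod_cast this

lemma growth_of_max (G : SimpleGraph V) (c : V) (hc : ∀ y, y ≠ c → G.Adj c y) (g : ℝ)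
    (hg : 0 < g)
    (H : ∀ {Ω : Type} [MeasurableSpace Ω] (μ : Measure Ω) [IsProbabilityMeasure μ]
      (X : ℕ → Ω → V), IsUniformIID μ X → ∀ᵐ ω ∂μ, Tendsto (fun n : ℕ =>
        (maxH (heightProcess G (fun _ => 0) (fun k => X k ω) n) : ℝ) / n) atTop (𝓝 g)) :
    IsGrowthRate G (Fintype.card V * g) := by
  have hne : Nonempty V := ⟨c⟩
  have hcard : (0:ℝ) < Fintype.card V := by exact_mod_cast Fintype.card_pos
  refine ⟨by positivity, ?_⟩
  intro Ω _ μ _ X hX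
  have hM := H μ X hX
  constructor
  · filter_upwards [hM] with ω hω
    simp only [iSup_eq_maxH, mul_div_assoc]
    exact hω.const_mul _
  · have hcnt : ∀ᵐ ω ∂μ, ∀ v, Tendsto
        (fun n : ℕ => ((run (cstep v) 0 (fun k => X k ω) n : ℕ) : ℝ) / n) atTop
        (𝓝 (Fintype.card V : ℝ)⁻¹) := ae_all_iff.2 (fun v => count_ae μ X hX v)
    filter_upwards [hM, hcnt] with ω hω hcω
    simp only [mul_div_assoc]
    refine Tendsto.const_mul _ ?_
    have hp : 0 < (Fintype.card V : ℝ)⁻¹ := by positivity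
    refine tendsto_order.2 ⟨fun y hy => ?_, fun y hy => ?_⟩
    · obtain ⟨a, ha0, ha1, hay⟩ : ∃ a : ℝ, 0 < a ∧ a < 1 ∧ y < g * a := by
        have hm : max 0 (y / g) < 1 := max_lt one_pos ((div_lt_one hg).2 hy)
        obtain ⟨a, h1, h2⟩ := exists_between hm
        refine ⟨a, (le_max_left _ _).trans_lt h1, h2, ?_⟩
        have := (le_max_right _ _).trans_lt h1
        rw [div_lt_iff₀ hg] at this
        linarith
      obtain ⟨b, hab, hb1⟩ := exists_between ha1
      have hw1 := window c _ _ hp (hcω c) a b ha0 hab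
      have hw2 : ∀ᶠ n : ℕ in atTop, ∀ x : V, ∃ t, ⌊b * (n:ℝ)⌋₊ ≤ t ∧ t < ⌊(1:ℝ) * (n:ℝ)⌋₊ ∧
          X t ω = x :=
        eventually_all.2 (fun x => window x _ _ hp (hcω x) b 1 (ha0.trans hab) hb1)
      have hfl := floor_tendsto (fun n =>
        (maxH (heightProcess G (fun _ => 0) (fun k => X k ω) n) : ℝ)) g a ha0 hω
      filter_upwards [hw1, hw2, hfl.eventually_const_lt hay] with n h1 h2 h3
      refine h3.trans_le ?_
      gcongr
      refine le_ciInf (fun x => ?_)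
      obtain ⟨t, ht1, ht2, ht3⟩ := h1
      obtain ⟨s, hs1, hs2, hs3⟩ := h2 x
      rw [one_mul, Nat.floor_natCast] at hs2
      exact_mod_cast height_ge G (fun k => X k ω) c hc x _ _ n t s ht1 ht2 hs1 hs2 ht3 hs3
    · filter_upwards [hω.eventually_lt_const hy] with n hn
      refine lt_of_le_of_lt ?_ hn
      gcongr
      refine (ciInf_le (Set.finite_range _).bddBelow c).trans ?_
      exact_mod_cast le_maxH _ c

end Graph

/-! ### The complete graph -/

lemma maxH_top (X : ℕ → Fin 11) (n : ℕ) :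
    maxH (heightProcess (⊤ : SimpleGraph (Fin 11)) (fun _ => 0) X n) = n := by
  induction n with
  | zero =>
    refine Nat.le_zero.1 (Finset.sup_le (fun x _ => ?_))
    simp [heightProcess]
  | succ n ih =>
    have key : heightProcess (⊤ : SimpleGraph (Fin 11)) (fun _ => 0) X (n+1) (X n) = n + 1 := by
      rw [height_succ_self, add_comm]
      congr 1
      refine Eq.trans ?_ ih
      unfold maxH
      congr 1
      funext y
      rw [if_pos]
      by_cases h : y = X n
      · exact Or.inl h
      · exact Or.inr (by simpa using Ne.symm h)
    apply le_antisymm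
    · refine Finset.sup_le (fun x _ => ?_)
      by_cases h : x = X n
      · rw [h, key]
      · rw [height_succ_ne _ _ _ _ h]
        have := le_maxH (heightProcess (⊤ : SimpleGraph (Fin 11)) (fun _ => 0) X n) x
        omega
    · exact key.symm.le.trans (le_maxH _ _)

lemma growth_top : IsGrowthRate (⊤ : SimpleGraph (Fin 11)) 11 := by
  have := growth_of_max (⊤ : SimpleGraph (Fin 11)) 0 (fun y hy => by simpa using hy.symm) 1
    one_pos (by
      intro Ω _ μ _ X hX
      refine Eventually.of_forall (fun ω => ?_)
      simp only [maxH_top]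
      refine tendsto_const_nhds.congr' ?_
      filter_upwards [eventually_ge_atTop 1] with n hn
      have : (n:ℝ) ≠ 0 := by positivity
      field_simp)
  simpa using this

/-! ### The triplicated butterfly graph -/

/-- The butterfly graph with every vertex replaced by a triangle: `0,1,2` are the centre,
`3,…,8` and `9,…,14` the wings. -/
def B : SimpleGraph (Fin 15) where
  Adj x y := x ≠ y ∧ (x.val < 3 ∨ y.val < 3 ∨ (x.val < 9 ↔ y.val < 9))
  symm := ⟨fun x y h => ⟨h.1.symm, by tauto⟩⟩
  loopless := ⟨fun x h => h.1 rfl⟩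

/-- Maximum over the left wing and the centre. -/
noncomputable def Lm (h : Fin 15 → ℕ) : ℕ := Finset.univ.sup (fun y => if y.val < 9 then h y else 0)

/-- Maximum over the right wing and the centre. -/
noncomputable def Rm (h : Fin 15 → ℕ) : ℕ :=
  Finset.univ.sup (fun y => if y.val < 3 ∨ ¬ y.val < 9 then h y else 0)

lemma maxH_eq (h : Fin 15 → ℕ) : maxH h = max (Lm h) (Rm h) := by
  refine Eq.trans ?_ Finset.sup_sup
  unfold maxH
  congr 1
  funext y
  simp only [Pi.sup_apply]
  by_cases h9 : y.val < 9
  · simp [h9]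
    split_ifs <;> simp
  · simp [h9]

/-- Dynamics of the pair `(Lm, Rm)`. -/
def bstep (s : ℕ × ℕ) (v : Fin 15) : ℕ × ℕ :=
  if v.val < 3 then (max s.1 s.2 + 1, max s.1 s.2 + 1)
  else if v.val < 9 then (s.1 + 1, s.2) else (s.1, s.2 + 1)

lemma sup_update (P : Fin 15 → Prop) [DecidablePred P] (h h' : Fin 15 → ℕ) (v : Fin 15)
    (hne : ∀ y, y ≠ v → h' y = h y) (hle : h v ≤ h' v)
    (hv : P v) (hb : ∀ y, P y → h y ≤ h' v) :
    Finset.univ.sup (fun y => if P y then h' y else 0) = h' v := by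
  apply le_antisymm
  · refine Finset.sup_le (fun y _ => ?_)
    split_ifs with hy
    · by_cases e : y = v
      · rw [e]
      · rw [hne y e]; exact hb y hy
    · exact Nat.zero_le _
  · have := Finset.le_sup (f := fun y => if P y then h' y else 0) (Finset.mem_univ v)
    simpa [hv] using this

lemma sup_noupdate (P : Fin 15 → Prop) [DecidablePred P] (h h' : Fin 15 → ℕ) (v : Fin 15)
    (hne : ∀ y, y ≠ v → h' y = h y) (hv : ¬ P v) :
    Finset.univ.sup (fun y => if P y then h' y else 0) =
      Finset.univ.sup (fun y => if P y then h y else 0) := by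
  congr 1
  funext y
  by_cases e : y = v
  · subst e; simp [hv]
  · rw [hne y e]

lemma le_Lm (h : Fin 15 → ℕ) (y : Fin 15) (hy : y.val < 9) : h y ≤ Lm h := by
  have := Finset.le_sup (f := fun y : Fin 15 => if y.val < 9 then h y else 0) (Finset.mem_univ y)
  simpa [hy, Lm] using this

lemma le_Rm (h : Fin 15 → ℕ) (y : Fin 15) (hy : y.val < 3 ∨ ¬ y.val < 9) : h y ≤ Rm h := by
  have := Finset.le_sup (f := fun y : Fin 15 => if y.val < 3 ∨ ¬ y.val < 9 then h y else 0)
    (Finset.mem_univ y)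
  simp only [hy, if_true] at this
  exact this

lemma run_B (X : ℕ → Fin 15) (n : ℕ) :
    (Lm (heightProcess B (fun _ => 0) X n), Rm (heightProcess B (fun _ => 0) X n))
      = run bstep (0, 0) X n := by
  induction n with
  | zero => simp [run, Lm, Rm, heightProcess]
  | succ n ih =>
    simp only [run]
    rw [← ih]
    have hne : ∀ y, y ≠ X n → heightProcess B (fun _ => 0) X (n+1) y =
      heightProcess B (fun _ => 0) X n y := fun y hy => height_succ_ne B X n y hy
    have hle := height_mono B X (X n) (Nat.le_succ n)
    have hself := height_succ_self B X n
    simp only at hle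
    generalize heightProcess B (fun _ => 0) X (n+1) = h' at *
    generalize heightProcess B (fun _ => 0) X n = h at *
    generalize X n = v at *
    clear ih
    have hLle := le_Lm h
    have hRle := le_Rm h
    by_cases h3 : v.val < 3
    · have e : h' v = max (Lm h) (Rm h) + 1 := by
        rw [hself, ← maxH_eq, maxH, add_comm]
        congr 2
        funext y
        rw [if_pos]
        by_cases e : y = v
        · exact Or.inl e
        · exact Or.inr ⟨Ne.symm e, Or.inl h3⟩
      have h9 : v.val < 9 := by omega
      have eL : Lm h' = h' v := sup_update (fun y => y.val < 9) h h' v hne hle h9 (by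
        intro y hy
        have := hLle y hy
        omega)
      have eR : Rm h' = h' v := sup_update (fun y => y.val < 3 ∨ ¬ y.val < 9) h h' v hne hle
        (Or.inl h3) (by
          intro y hy
          have := hRle y hy
          omega)
      simp [bstep, h3, eL, eR, e]
    · by_cases h9 : v.val < 9
      · have e : h' v = Lm h + 1 := by
          rw [hself, Lm, add_comm]
          congr 2
          funext y
          have : (y = v ∨ B.Adj v y) ↔ y.val < 9 := by
            simp only [B, h3, h9, true_iff, false_or]
            by_cases e : y = v
            · subst e; simp [h9]
            · have := Ne.symm e
              simp only [e, false_or, ne_eq, this, not_false_eq_true, true_and]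
              omega
          simp only [this]
        have eL : Lm h' = h' v := sup_update (fun y => y.val < 9) h h' v hne hle h9 (by
          intro y hy
          have := hLle y hy
          omega)
        have eR : Rm h' = Rm h := sup_noupdate (fun y => y.val < 3 ∨ ¬ y.val < 9) h h' v hne
          (by omega)
        simp [bstep, h3, h9, eL, eR, e]
      · have e : h' v = Rm h + 1 := by
          rw [hself, Rm, add_comm]
          congr 2
          funext y
          have : (y = v ∨ B.Adj v y) ↔ (y.val < 3 ∨ ¬ y.val < 9) := by
            simp only [B, h3, h9, false_iff, false_or]
            by_cases e : y = v
            · subst e; simp [h9]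
            · have := Ne.symm e
              simp only [e, false_or, ne_eq, this, not_false_eq_true, true_and]
          simp only [this]
        have eR : Rm h' = h' v := sup_update (fun y => y.val < 3 ∨ ¬ y.val < 9) h h' v hne hle
          (Or.inr h9) (by
            intro y hy
            have := hRle y hy
            omega)
        have eL : Lm h' = Lm h := sup_noupdate (fun y => y.val < 9) h h' v hne h9
        simp [bstep, h3, h9, eL, eR, e]

/-- Bounded corrector. -/
noncomputable def corr (s : ℕ × ℕ) : ℝ := (2/3) * (1/2 : ℝ) ^ (max s.1 s.2 - min s.1 s.2)

lemma corr_nonneg (s : ℕ × ℕ) : 0 ≤ corr s := by unfold corr; positivity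

lemma corr_le (s : ℕ × ℕ) : corr s ≤ 1 := by
  unfold corr
  have : (1/2 : ℝ) ^ (max s.1 s.2 - min s.1 s.2) ≤ 1 := pow_le_one₀ (by norm_num) (by norm_num)
  linarith

/-- Lyapunov function. -/
noncomputable def Wb (s : ℕ × ℕ) : ℝ := (max s.1 s.2 : ℕ) + corr s

lemma Wb_sum (s : ℕ × ℕ) : ∑ v, (Wb (bstep s v) - Wb s - 11/15) = 0 := by
  have e : ∑ v, (Wb (bstep s v) - Wb s - 11/15) =
      3 * Wb (max s.1 s.2 + 1, max s.1 s.2 + 1) + 6 * Wb (s.1 + 1, s.2) + 6 * Wb (s.1, s.2 + 1)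
        - 15 * Wb s - 11 := by
    simp [Fin.sum_univ_succ, bstep]
    ring
  rw [e]
  obtain ⟨a, b⟩ := s
  rcases lt_trichotomy a b with h | h | h
  · obtain ⟨k, rfl⟩ := Nat.exists_eq_add_of_lt h
    have m1 : max a (a + k + 1) = a + k + 1 := by omega
    have m2 : max (a+1) (a + k + 1) = a + k + 1 := by omega
    have m3 : max a (a + k + 1 + 1) = a + k + 1 + 1 := by omega
    have n1 : min a (a + k + 1) = a := by omega
    have n2 : min (a+1) (a + k + 1) = a + 1 := by omega
    have n3 : min a (a + k + 1 + 1) = a := by omega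
    have p1 : a + k + 1 - a = k + 1 := by omega
    have p2 : a + k + 1 - (a + 1) = k := by omega
    have p3 : a + k + 1 + 1 - a = k + 2 := by omega
    simp only [Wb, corr, m1, m2, m3, n1, n2, n3, p1, p2, p3, max_self, min_self, Nat.sub_self]
    push_cast
    ring
  · subst h
    have m2 : max (a+1) a = a + 1 := by omega
    have m3 : max a (a + 1) = a + 1 := by omega
    have n2 : min (a+1) a = a := by omega
    have n3 : min a (a + 1) = a := by omega
    have p2 : a + 1 - a = 1 := by omega
    simp only [Wb, corr, m2, m3, n2, n3, p2, max_self, min_self, Nat.sub_self]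
    push_cast
    ring
  · obtain ⟨k, rfl⟩ := Nat.exists_eq_add_of_lt h
    have m1 : max (b + k + 1) b = b + k + 1 := by omega
    have m2 : max (b + k + 1) (b+1) = b + k + 1 := by omega
    have m3 : max (b + k + 1 + 1) b = b + k + 1 + 1 := by omega
    have n1 : min (b + k + 1) b = b := by omega
    have n2 : min (b + k + 1) (b+1) = b + 1 := by omega
    have n3 : min (b + k + 1 + 1) b = b := by omega
    have p1 : b + k + 1 - b = k + 1 := by omega
    have p2 : b + k + 1 - (b + 1) = k := by omega
    have p3 : b + k + 1 + 1 - b = k + 2 := by omega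
    simp only [Wb, corr, m1, m2, m3, n1, n2, n3, p1, p2, p3, max_self, min_self, Nat.sub_self]
    push_cast
    ring

lemma Wb_bound (s : ℕ × ℕ) (v : Fin 15) : |Wb (bstep s v) - Wb s - 11/15| ≤ 3 := by
  have h1 := corr_nonneg s
  have h2 := corr_le s
  have h3 := corr_nonneg (bstep s v)
  have h4 := corr_le (bstep s v)
  have h5 : max s.1 s.2 ≤ max (bstep s v).1 (bstep s v).2 := by
    unfold bstep; split_ifs <;> simp only <;> omega
  have h6 : max (bstep s v).1 (bstep s v).2 ≤ max s.1 s.2 + 1 := by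
    unfold bstep; split_ifs <;> simp only <;> omega
  have h5' : ((max s.1 s.2 : ℕ) : ℝ) ≤ ((max (bstep s v).1 (bstep s v).2 : ℕ) : ℝ) := by
    exact_mod_cast h5
  have h6' : ((max (bstep s v).1 (bstep s v).2 : ℕ) : ℝ) ≤ ((max s.1 s.2 : ℕ) : ℝ) + 1 := by
    exact_mod_cast h6
  unfold Wb
  rw [abs_le]
  constructor <;> linarith

lemma growth_B : IsGrowthRate B 11 := by
  have := growth_of_max B 0 (fun y hy => ⟨hy.symm, Or.inl (by simp)⟩) (11/15) (by norm_num) (by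
    intro Ω _ μ _ X hX
    filter_upwards [slln μ X hX 0 bstep (0, 0) Wb (11/15) 3 Wb_sum Wb_bound] with ω hω
    have hz : Tendsto (fun n : ℕ => corr (run bstep (0,0) (fun k => X k ω) n) / n) atTop (𝓝 0) := by
      refine squeeze_zero (fun n => div_nonneg (corr_nonneg _) (Nat.cast_nonneg n)) (fun n => ?_)
        (tendsto_const_div_atTop_nhds_zero_nat 1)
      gcongr
      exact corr_le _
    have := hω.sub hz
    rw [sub_zero] at this
    refine this.congr (fun n => ?_)
    rw [maxH_eq, ← sub_div]
    have hr := run_B (fun k => X k ω) n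
    rw [← hr, Wb]
    simp)
  have e : ((Fintype.card (Fin 15) : ℕ) : ℝ) * (11/15) = 11 := by
    simp; norm_num
  rwa [e] at this

lemma B_connected : B.Connected := by
  have h0 : ∀ y, B.Reachable 0 y := by
    intro y
    by_cases h : y = 0
    · subst h; exact SimpleGraph.Reachable.refl _
    · exact SimpleGraph.Adj.reachable ⟨Ne.symm h, Or.inl (by simp)⟩
  exact ⟨fun x y => (h0 x).symm.trans (h0 y)⟩

end BD

theorem stmt11 :
    ∃ (p q : ℕ) (G : SimpleGraph (Fin p)) (H : SimpleGraph (Fin q)) (γ : ℝ),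
      G.Connected ∧ H.Connected ∧ IsGrowthRate G γ ∧ IsGrowthRate H γ ∧
      IsEmpty (G ≃g H) := by
  refine ⟨15, 11, BD.B, ⊤, 11, BD.B_connected, SimpleGraph.connected_top, BD.growth_B,
    BD.growth_top, ⟨fun e => ?_⟩⟩
  have := Fintype.card_congr e.toEquiv
  simp at this
end
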